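/- arXiv:0902.3845 — 2 statements merged into one kernel-verified Lean document; each statement's English description precedes it below -/
import Mathlib

section
/- For every positive integer n, the alternating group A_n possesses a 2-basic set. -/
open scoped Classical

/-- `f : G → ℂ` is an irreducible complex character of `G`. -/
def IsIrrChar (G : Type) [Group G] (f : G → ℂ) : Prop :=
  ∃ V : FDRep ℂ G, CategoryTheory.Simple V ∧ FDRep.character V = f

/-- Restriction of a function to 2-regular (odd order) elements, extended by zero. -/
noncomputable def twoReg {G : Type*} [Monoid G] (f : G → ℂ) : G → ℂ :=
  fun g => if Odd (orderOf g) then f g else 0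

/-- `B` is a 2-basic set of `G`: the restrictions to 2-regular elements of the members of `B`
are `ℤ`-linearly independent and span the same `ℤ`-module as the restrictions to 2-regular
elements of all irreducible characters. -/
def IsTwoBasicSet (G : Type) [Group G] (B : Set (G → ℂ)) : Prop :=
  B ⊆ {f | IsIrrChar G f} ∧
  LinearIndependent ℤ (fun f : B => twoReg (f : G → ℂ)) ∧
  Submodule.span ℤ (twoReg '' B) = Submodule.span ℤ (twoReg '' {f | IsIrrChar G f})


namespace TwoBasic

section Characters

variable {G : Type} [Group G]

/-- `f` is the character of a finite-dimensional complex representation of `G`. -/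
def IsChar (f : G → ℂ) : Prop := ∃ V : FDRep ℂ G, V.character = f

lemma IsChar.of_rep {V : Type} [AddCommGroup V] [Module ℂ V] [FiniteDimensional ℂ V]
    (ρ : Representation ℂ G V) : IsChar ρ.character :=
  ⟨FDRep.of ρ, rfl⟩

lemma IsChar.mul {f g : G → ℂ} (hf : IsChar f) (hg : IsChar g) : IsChar (f * g) := by
  obtain ⟨V, rfl⟩ := hf
  obtain ⟨W, rfl⟩ := hg
  exact ⟨_, FDRep.char_tensor V W⟩

lemma IsChar.comp {H : Type} [Group H] {f : G → ℂ} (hf : IsChar f) (φ : H →* G) :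
    IsChar (f ∘ φ) := by
  obtain ⟨V, rfl⟩ := hf
  exact ⟨FDRep.of (V.ρ.comp φ), rfl⟩

lemma IsChar.conj {f : G → ℂ} (hf : IsChar f) (g x : G) : f (g * x * g⁻¹) = f x := by
  obtain ⟨V, rfl⟩ := hf
  exact V.char_conj x g

lemma isChar_linear (χ : G →* ℂ) : IsChar (fun g => χ g) := by
  let ρ : Representation ℂ G ℂ := (Module.toModuleEnd ℂ (S := ℂ) ℂ).toMonoidHom.comp χ
  have h : ρ.character = fun g => χ g := by
    ext g
    have : ρ g = χ g • LinearMap.id := by ext; simp [ρ]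
    simp [Representation.character, this]
  exact h ▸ IsChar.of_rep ρ

/-- The character of the permutation representation counts fixed points. -/
lemma isChar_fixedPoints (X : Type) [Fintype X] [MulAction G X] :
    IsChar (fun g : G => ((Finset.univ.filter fun x : X => g • x = x).card : ℂ)) := by
  let ρ : Representation ℂ G (X → ℂ) :=
    { toFun := fun g => LinearMap.funLeft ℂ ℂ (fun x => g⁻¹ • x)
      map_one' := by ext; simp
      map_mul' := fun g h => by
        ext f x
        simp [LinearMap.funLeft_apply, mul_smul, mul_inv_rev] }
  have h : ρ.character =
      fun g : G => ((Finset.univ.filter fun x : X => g • x = x).card : ℂ) := by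
    ext g
    rw [Representation.character, LinearMap.trace_eq_matrix_trace ℂ (Pi.basisFun ℂ X),
      Matrix.trace, Finset.card_filter]
    push_cast
    refine Finset.sum_congr rfl fun x _ => ?_
    simp only [Matrix.diag_apply, LinearMap.toMatrix_apply, Pi.basisFun_repr, Pi.basisFun_apply,
      ρ, MonoidHom.coe_mk, OneHom.coe_mk, LinearMap.funLeft_apply, Pi.single_apply,
      inv_smul_eq_iff]
    exact if_congr eq_comm rfl rfl
  exact h ▸ IsChar.of_rep ρ

lemma isChar_of_isIrrChar {f : G → ℂ} (hf : IsIrrChar G f) : IsChar f := by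
  obtain ⟨V, _, h⟩ := hf
  exact ⟨V, h⟩

variable [Fintype G]

/-- The standard bilinear form on complex functions on a finite group. -/
noncomputable def cinner : (G → ℂ) →ₗ[ℂ] (G → ℂ) →ₗ[ℂ] ℂ :=
  LinearMap.mk₂ ℂ (fun f g => (Nat.card G : ℂ)⁻¹ * ∑ x, f x * g x⁻¹)
    (fun _ _ _ => by simp [add_mul, Finset.sum_add_distrib, mul_add])
    (fun _ _ _ => by simp [Finset.mul_sum]; exact Finset.sum_congr rfl fun _ _ => by ring)
    (fun _ _ _ => by simp [mul_add, Finset.sum_add_distrib])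
    (fun _ _ _ => by simp [Finset.mul_sum]; exact Finset.sum_congr rfl fun _ _ => by ring)

lemma cinner_apply (f g : G → ℂ) :
    cinner f g = (Nat.card G : ℂ)⁻¹ * ∑ x, f x * g x⁻¹ := rfl

lemma cinner_comm (f g : G → ℂ) : cinner f g = cinner g f := by
  rw [cinner_apply, cinner_apply]
  congr 1
  refine Fintype.sum_equiv (Equiv.inv G) _ _ fun x => ?_
  simp [mul_comm]

lemma cinner_comp_mulEquiv (f g : G → ℂ) (φ : G ≃* G) :
    cinner (f ∘ φ) (g ∘ φ) = cinner f g := by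
  rw [cinner_apply, cinner_apply]
  congr 1
  exact Fintype.sum_equiv φ.toEquiv _ _ fun x => by simp

lemma isIrrChar_iff {f : G → ℂ} : IsIrrChar G f ↔ IsChar f ∧ cinner f f = 1 := by
  have hG : (Nat.card G : ℂ) ≠ 0 := by simp
  constructor
  · intro h
    refine ⟨isChar_of_isIrrChar h, ?_⟩
    obtain ⟨V, hV, rfl⟩ := h
    rw [FDRep.simple_iff_char_is_norm_one] at hV
    rw [cinner_apply, hV, inv_mul_cancel₀ hG]
  · rintro ⟨⟨V, rfl⟩, h⟩
    refine ⟨V, ?_, rfl⟩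
    rw [FDRep.simple_iff_char_is_norm_one]
    rwa [cinner_apply, inv_mul_eq_one₀ hG, eq_comm] at h

lemma cinner_irr {f g : G → ℂ} (hf : IsIrrChar G f) (hg : IsIrrChar G g) :
    cinner f g = if f = g then 1 else 0 := by
  split_ifs with h
  · subst h
    exact (isIrrChar_iff.1 hf).2
  · obtain ⟨V, hV, rfl⟩ := hf
    obtain ⟨W, hW, rfl⟩ := hg
    have : Invertible (Nat.card G : ℂ) := invertibleOfNonzero (by simp)
    rw [cinner_apply, FDRep.char_orthonormal V W, if_neg]
    rintro ⟨i⟩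
    exact h (FDRep.char_iso i)

lemma linearIndependent_irr : LinearIndepOn ℂ id {f : G → ℂ | IsIrrChar G f} := by
  rw [linearIndepOn_iff]
  intro l hl h0
  ext f
  by_contra hf
  have hfs : f ∈ l.support := Finsupp.mem_support_iff.2 hf
  have key := congrArg (fun v => cinner v f) h0
  simp only [Finsupp.linearCombination_apply, Finsupp.sum, map_sum, map_smul, id,
    LinearMap.sum_apply, LinearMap.smul_apply, map_zero, LinearMap.zero_apply] at key
  rw [Finset.sum_eq_single_of_mem f hfs] at key
  · rw [cinner_irr (hl hfs) (hl hfs)] at key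
    simp at key
    exact hf key
  · intro g hg hgf
    rw [cinner_irr (hl hg) (hl hfs), if_neg hgf, smul_zero]

lemma finite_irr : {f : G → ℂ | IsIrrChar G f}.Finite :=
  (linearIndependent_irr (G := G)).setFinite

variable (G) in
/-- The finite set of irreducible complex characters. -/
noncomputable def irr : Finset (G → ℂ) := finite_irr.toFinset

@[simp] lemma mem_irr {f : G → ℂ} : f ∈ irr G ↔ IsIrrChar G f := by simp [irr]

open Representation in
lemma char_mem_closure_irr (d : ℕ) : ∀ (V : Type) [AddCommGroup V] [Module ℂ V]
    [FiniteDimensional ℂ V] (ρ : Representation ℂ G V), Module.finrank ℂ V = d →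
    ρ.character ∈ AddSubmonoid.closure {f : G → ℂ | IsIrrChar G f} := by
  induction d using Nat.strong_induction_on with
  | _ d ih =>
    intro V _ _ _ ρ hd
    by_cases hirr : IsIrreducible ρ
    · refine AddSubmonoid.subset_closure ?_
      rw [Set.mem_ofPred_eq, isIrrChar_iff]
      refine ⟨IsChar.of_rep ρ, ?_⟩
      have : Invertible (Nat.card G : ℂ) := invertibleOfNonzero (by simp)
      rw [cinner_apply, card_inv_mul_sum_char_mul_char_eq_finrank]
      simp
    by_cases hV : Subsingleton V
    · have : ρ.character = 0 := by
        ext g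
        simp [Representation.character, Subsingleton.elim (ρ g) 0]
      rw [this]
      exact zero_mem _
    rw [not_subsingleton_iff_nontrivial] at hV
    obtain ⟨W, hWb, hWt⟩ : ∃ W : Subrepresentation ρ, W ≠ ⊥ ∧ W ≠ ⊤ := by
      by_contra! hcon
      refine hirr { exists_pair_ne := ⟨⊥, ⊤, fun h => ?_⟩, eq_bot_or_eq_top := fun W => ?_ }
      · exact bot_ne_top (α := Submodule ℂ V) (congrArg Subrepresentation.toSubmodule h)
      · exact or_iff_not_imp_left.2 (hcon W)
    have hss : IsSemisimpleRepresentation ρ := by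
      rw [isSemisimpleRepresentation_iff_isSemisimpleModule_asModule]
      have : NeZero (Nat.card G : ℂ) := ⟨by simp⟩
      infer_instance
    obtain ⟨U, hU⟩ := hss.exists_isCompl W
    have hc : IsCompl W.toSubmodule U.toSubmodule := by
      rw [isCompl_iff, disjoint_iff, codisjoint_iff] at hU ⊢
      exact ⟨congrArg Subrepresentation.toSubmodule hU.1,
        congrArg Subrepresentation.toSubmodule hU.2⟩
    have hWb' : W.toSubmodule ≠ ⊥ := fun h =>
      hWb (Subrepresentation.toSubmodule_injective h)
    have hWt' : W.toSubmodule ≠ ⊤ := fun h =>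
      hWt (Subrepresentation.toSubmodule_injective h)
    have hdim := Submodule.finrank_add_eq_of_isCompl hc
    have hlt := Submodule.finrank_lt hWt'
    have hpos : 0 < Module.finrank ℂ W.toSubmodule := by
      rw [Nat.pos_iff_ne_zero, Ne, Submodule.finrank_eq_zero]
      exact hWb'
    have hsum : ρ.character = W.toRepresentation.character + U.toRepresentation.character := by
      ext g
      have hint := (DirectSum.isInternal_submodule_iff_isCompl
        (fun b : Bool => if b then W.toSubmodule else U.toSubmodule) (i := true) (j := false)
        (by simp) (by ext b; cases b <;> simp)).2 (by simpa using hc)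
      have hm : ∀ b : Bool, Set.MapsTo (ρ g) ((if b then W.toSubmodule else U.toSubmodule :
          Submodule ℂ V) : Set V) ((if b then W.toSubmodule else U.toSubmodule :
          Submodule ℂ V) : Set V) := by
        intro b
        cases b
        · exact fun v hv => U.apply_mem_toSubmodule g hv
        · exact fun v hv => W.apply_mem_toSubmodule g hv
      have := LinearMap.trace_eq_sum_trace_restrict hint hm
      rw [Fintype.sum_bool] at this
      exact this
    rw [hsum]
    exact add_mem (ih _ (by omega) _ W.toRepresentation rfl)
      (ih _ (by omega) _ U.toRepresentation rfl)

/-- Every character is a nonnegative integral combination of irreducible characters. -/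
lemma IsChar.exists_mult {f : G → ℂ} (hf : IsChar f) :
    ∃ m : (G → ℂ) → ℕ, f = ∑ ψ ∈ irr G, (m ψ : ℂ) • ψ := by
  obtain ⟨V, rfl⟩ := hf
  have h := char_mem_closure_irr _ V V.ρ rfl
  change V.character ∈ _ at h
  generalize V.character = f at h ⊢
  induction h using AddSubmonoid.closure_induction with
  | mem f hf =>
    refine ⟨fun ψ => if ψ = f then 1 else 0, ?_⟩
    rw [Finset.sum_eq_single_of_mem f (mem_irr.2 hf)]
    · simp
    · intro g _ hg
      simp [hg]
  | zero => exact ⟨0, by simp⟩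
  | add f g _ _ hf hg =>
    obtain ⟨m, hm⟩ := hf
    obtain ⟨k, hk⟩ := hg
    refine ⟨m + k, ?_⟩
    rw [hm, hk, ← Finset.sum_add_distrib]
    exact Finset.sum_congr rfl fun ψ _ => by simp [add_smul]

lemma cinner_sum_irr (a : (G → ℂ) → ℂ) {ψ : G → ℂ} (hψ : ψ ∈ irr G) :
    cinner (∑ θ ∈ irr G, a θ • θ) ψ = a ψ := by
  simp only [map_sum, map_smul, LinearMap.sum_apply, LinearMap.smul_apply]
  rw [Finset.sum_eq_single_of_mem ψ hψ]
  · rw [cinner_irr (mem_irr.1 hψ) (mem_irr.1 hψ)]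
    simp
  · intro θ hθ hne
    rw [cinner_irr (mem_irr.1 hθ) (mem_irr.1 hψ), if_neg hne, smul_zero]

lemma cinner_sum_irr_sum (a b : (G → ℂ) → ℂ) :
    cinner (∑ θ ∈ irr G, a θ • θ) (∑ θ ∈ irr G, b θ • θ) = ∑ θ ∈ irr G, a θ * b θ := by
  rw [map_sum]
  refine Finset.sum_congr rfl fun θ hθ => ?_
  rw [map_smul, cinner_sum_irr a hθ, smul_eq_mul, mul_comm]

end Characters

section IndexTwo

variable {S : Type} [Group S] [Fintype S] {A : Subgroup S} [A.Normal]

/-- Restriction of a function to a subgroup. -/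
def res (A : Subgroup S) : (S → ℂ) →ₗ[ℂ] (A → ℂ) := LinearMap.funLeft ℂ ℂ A.subtype

omit [Fintype S] [A.Normal] in
@[simp] lemma res_apply (f : S → ℂ) (a : A) : res A f a = f a := rfl

omit [Fintype S] [A.Normal] in
lemma isChar_res {f : S → ℂ} (hf : IsChar f) : IsChar (res A f) := hf.comp A.subtype

/-- Extension by zero of a function from a subgroup. -/
noncomputable def extZero (f : A → ℂ) (x : S) : ℂ := if h : x ∈ A then f ⟨x, h⟩ else 0

omit [Fintype S] [A.Normal] in
@[simp] lemma extZero_coe (f : A → ℂ) (a : A) : extZero f (a : S) = f a := by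
  simp [extZero]

/-- The twist of a function on a normal subgroup by conjugation. -/
def conjTwist (τ : S) (f : A → ℂ) : A → ℂ := f ∘ MulAut.conjNormal τ

omit [Fintype S] in
lemma conjTwist_apply (τ : S) (f : A → ℂ) (a : A) :
    conjTwist τ f a = f (MulAut.conjNormal τ a) := rfl

omit [Fintype S] in
lemma IsChar.conjTwist {f : A → ℂ} (hf : IsChar f) (τ : S) : IsChar (conjTwist τ f) :=
  hf.comp (MulAut.conjNormal τ : A ≃* A).toMonoidHom

omit [Fintype S] in
lemma IsChar.conjTwist_of_mem {f : A → ℂ} (hf : IsChar f) {σ : S} (hσ : σ ∈ A) :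
    TwoBasic.conjTwist σ f = f := by
  ext a
  rw [conjTwist_apply]
  exact hf.conj ⟨σ, hσ⟩ a

omit [Fintype S] in
lemma conjTwist_conjTwist (σ τ : S) (f : A → ℂ) :
    conjTwist σ (conjTwist τ f) = conjTwist (τ * σ) f := by
  ext a
  simp [conjTwist_apply]

omit [Fintype S] in
lemma conjTwist_res {f : S → ℂ} (hf : IsChar f) (τ : S) :
    conjTwist τ (res A f) = res A f := by
  ext a
  simpa [conjTwist_apply] using hf.conj τ a

variable [Fintype A]

omit [Fintype S] in
lemma cinner_conjTwist (f g : A → ℂ) (τ : S) :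
    cinner (conjTwist τ f) (conjTwist τ g) = cinner f g :=
  cinner_comp_mulEquiv f g _

omit [Fintype S] in
lemma conjTwist_mem_irr {f : A → ℂ} (hf : f ∈ irr A) (τ : S) : conjTwist τ f ∈ irr A := by
  rw [mem_irr, isIrrChar_iff] at hf ⊢
  exact ⟨hf.1.conjTwist τ, by rw [cinner_conjTwist, hf.2]⟩

/-- The irreducible constituents of the restriction of `ψ`. -/
noncomputable def constituents (A : Subgroup S) [Fintype A] (ψ : S → ℂ) : Finset (A → ℂ) :=
  (irr A).filter fun θ => cinner (res A ψ) θ ≠ 0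

lemma conjTwist_mem_constituents {ψ : S → ℂ} (hψ : ψ ∈ irr S) {θ : A → ℂ}
    (hθ : θ ∈ constituents A ψ) (τ : S) : conjTwist τ θ ∈ constituents A ψ := by
  rw [constituents, Finset.mem_filter] at hθ ⊢
  refine ⟨conjTwist_mem_irr hθ.1 τ, ?_⟩
  rw [← conjTwist_res (isChar_of_isIrrChar (mem_irr.1 hψ)) τ, cinner_conjTwist]
  exact hθ.2

variable {ε : S →* ℂ} (hε : ∀ x, ε x = if x ∈ A then 1 else -1)
include hε

omit [Fintype S] [A.Normal] [Fintype A] in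
lemma sign_inv (x : S) : ε x⁻¹ = ε x := by
  simp [hε]

omit [Fintype S] [A.Normal] [Fintype A] in
lemma sign_mul_mem_iff {σ τ : S} (hσ : σ ∉ A) (hτ : τ ∉ A) : σ * τ ∈ A := by
  by_contra h
  have := map_mul ε σ τ
  rw [hε, hε, hε, if_neg h, if_neg hσ, if_neg hτ] at this
  norm_num at this

omit [Fintype S] [A.Normal] [Fintype A] in
lemma mem_of_odd_orderOf {x : S} (hx : Odd (orderOf x)) : x ∈ A := by
  by_contra h
  have h1 : ε x ^ orderOf x = 1 := by rw [← map_pow, pow_orderOf_eq_one, map_one]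
  rw [hε, if_neg h, hx.neg_one_pow] at h1
  norm_num at h1

omit [Fintype S] [Fintype A] in
lemma IsChar.conjTwist_eq {f : A → ℂ} (hf : IsChar f) {σ τ : S} (hσ : σ ∉ A) (hτ : τ ∉ A) :
    TwoBasic.conjTwist σ f = TwoBasic.conjTwist τ f := by
  have h : σ * τ⁻¹ ∈ A := sign_mul_mem_iff hε hσ (by simpa using hτ)
  conv_rhs => rw [← hf.conjTwist_of_mem h, conjTwist_conjTwist]
  simp

omit [Fintype S] [A.Normal] [Fintype A] in
lemma card_eq_two_mul {τ : S} (hτ : τ ∉ A) : (Nat.card S : ℂ) = 2 * Nat.card A := by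
  rw [← A.card_mul_index, Subgroup.index_eq_two_iff.2 ⟨τ, fun b => ?_⟩]
  · push_cast; ring
  · by_cases hb : b ∈ A
    · exact Or.inr ⟨hb, by rwa [Subgroup.mul_mem_cancel_left _ hb]⟩
    · simp [hb, sign_mul_mem_iff hε hb hτ]

omit [A.Normal] in
lemma cinner_extZero {τ : S} (hτ : τ ∉ A) (f : A → ℂ) (g : S → ℂ) :
    2 * cinner (extZero f) g = cinner f (res A g) := by
  rw [cinner_apply, cinner_apply, card_eq_two_mul hε hτ]
  have : ∑ x, extZero f x * g x⁻¹ = ∑ a : A, f a * res A g a⁻¹ := by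
    rw [← Finset.sum_subset (Finset.subset_univ (Finset.univ.filter fun x => x ∈ A))]
    · rw [Finset.sum_subtype (p := fun x => x ∈ A) _ (by simp)]
      exact Fintype.sum_congr _ _ fun a => by simp
    · intro x _ hx
      simp at hx
      simp [extZero, hx]
  rw [this]
  have : (Nat.card A : ℂ) ≠ 0 := by simp
  field_simp

omit [Fintype S] [A.Normal] [Fintype A] in
lemma two_smul_extZero_res (f : S → ℂ) : (2 : ℂ) • extZero (res A f) = f + (fun x => ε x) * f := by
  ext x
  by_cases hx : x ∈ A
  · simp [extZero, hε, hx]; ring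
  · simp [extZero, hε, hx]

omit [A.Normal] in
lemma cinner_res {τ : S} (hτ : τ ∉ A) (f g : S → ℂ) :
    cinner (res A f) (res A g) = cinner f g + cinner ((fun x => ε x) * f) g := by
  rw [← cinner_extZero hε hτ, ← LinearMap.add_apply, ← map_add, ← two_smul_extZero_res hε]
  simp

omit [A.Normal] [Fintype A] in
lemma sign_mul_mem_irr {ψ : S → ℂ} (hψ : ψ ∈ irr S) : (fun x => ε x) * ψ ∈ irr S := by
  rw [mem_irr, isIrrChar_iff] at hψ ⊢
  refine ⟨(isChar_linear ε).mul hψ.1, ?_⟩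
  rw [← hψ.2, cinner_apply, cinner_apply]
  congr 1
  refine Finset.sum_congr rfl fun x _ => ?_
  have : ε x * ε x = 1 := by rw [hε]; split_ifs <;> norm_num
  simp only [Pi.mul_apply, sign_inv hε]
  linear_combination (ψ x * ψ x⁻¹) * this

omit [A.Normal] in
/-- The restriction of an irreducible character to a subgroup of index two is multiplicity free. -/
lemma res_eq_sum_constituents {τ : S} (hτ : τ ∉ A) {ψ : S → ℂ} (hψ : ψ ∈ irr S) :
    res A ψ = ∑ θ ∈ constituents A ψ, θ := by
  obtain ⟨m, hm⟩ := (isChar_res (A := A) (isChar_of_isIrrChar (mem_irr.1 hψ))).exists_mult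
  have hle : ∑ θ ∈ irr A, m θ * m θ ≤ 2 := by
    have h := cinner_res hε hτ ψ ψ
    rw [hm, cinner_sum_irr_sum, cinner_irr (mem_irr.1 hψ) (mem_irr.1 hψ),
      cinner_irr (mem_irr.1 (sign_mul_mem_irr hε hψ)) (mem_irr.1 hψ), if_pos rfl] at h
    have h' : ((∑ θ ∈ irr A, m θ * m θ : ℕ) : ℂ) =
        ((1 + if (fun x => ε x) * ψ = ψ then 1 else 0 : ℕ) : ℂ) := by
      push_cast
      exact h
    rw [Nat.cast_inj.1 h']
    split_ifs <;> simp
  rw [constituents, Finset.sum_filter]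
  conv_lhs => rw [hm]
  refine Finset.sum_congr rfl fun θ hθ => ?_
  have h1 : m θ * m θ ≤ 2 :=
    (Finset.single_le_sum (f := fun θ => m θ * m θ) (fun _ _ => Nat.zero_le _) hθ).trans hle
  have h2 : m θ = 0 ∨ m θ = 1 := by
    have : m θ < 2 := by nlinarith
    omega
  have h3 : cinner (res A ψ) θ = m θ := by
    rw [hm, cinner_sum_irr (fun θ => (m θ : ℂ)) hθ]
  rw [h3]
  rcases h2 with h2 | h2 <;> simp [h2]

omit [A.Normal] in
lemma cinner_res_eq_zero_or {τ : S} (hτ : τ ∉ A) {ψ φ : S → ℂ} (hψ : ψ ∈ irr S)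
    (hφ : φ ∈ irr S) : cinner (res A ψ) (res A φ) = 0 ∨ res A ψ = res A φ := by
  by_cases h1 : ψ = φ
  · simp [h1]
  by_cases h2 : (fun x => ε x) * ψ = φ
  · right
    rw [← h2]
    ext a
    simp [hε]
  left
  rw [cinner_res hε hτ, cinner_irr (mem_irr.1 hψ) (mem_irr.1 hφ),
    cinner_irr (mem_irr.1 (sign_mul_mem_irr hε hψ)) (mem_irr.1 hφ), if_neg h1, if_neg h2, add_zero]

omit [A.Normal] in
lemma res_eq_of_mem_constituents {τ : S} (hτ : τ ∉ A) {ψ φ : S → ℂ} (hψ : ψ ∈ irr S)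
    (hφ : φ ∈ irr S) {θ : A → ℂ} (h1 : θ ∈ constituents A ψ) (h2 : θ ∈ constituents A φ) :
    res A ψ = res A φ := by
  refine (cinner_res_eq_zero_or hε hτ hψ hφ).resolve_left fun h => ?_
  rw [res_eq_sum_constituents hε hτ hψ, res_eq_sum_constituents hε hτ hφ] at h
  simp only [map_sum, LinearMap.sum_apply] at h
  have h' : ∀ a ∈ constituents A φ, ∀ b ∈ constituents A ψ,
      cinner b a = ((if b = a then 1 else 0 : ℕ) : ℂ) := by
    intro a ha b hb
    rw [cinner_irr (mem_irr.1 (Finset.mem_filter.1 hb).1) (mem_irr.1 (Finset.mem_filter.1 ha).1)]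
    split_ifs <;> simp
  rw [Finset.sum_congr rfl fun a ha => Finset.sum_congr rfl (h' a ha)] at h
  norm_cast at h
  simp only [Finset.sum_eq_zero_iff] at h
  simpa using h θ h2 θ h1

variable (hspan : ∀ f : S → ℂ, (∀ g x, f (g * x * g⁻¹) = f x) →
  f ∈ Submodule.span ℂ {ψ : S → ℂ | IsIrrChar S ψ})
include hspan

omit [A.Normal] [Fintype A] hε in
lemma eq_sum_cinner {f : S → ℂ} (hf : ∀ g x, f (g * x * g⁻¹) = f x) :
    f = ∑ ψ ∈ irr S, cinner f ψ • ψ := by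
  obtain ⟨a, ha⟩ : ∃ a : (S → ℂ) → ℂ, f = ∑ ψ ∈ irr S, a ψ • ψ := by
    have h := hspan f hf
    have h2 : {ψ : S → ℂ | IsIrrChar S ψ} = (irr S : Set (S → ℂ)) := by ext; simp
    rw [h2, Submodule.mem_span_finset] at h
    obtain ⟨a, _, ha⟩ := h
    exact ⟨a, ha.symm⟩
  conv_lhs => rw [ha]
  refine Finset.sum_congr rfl fun ψ hψ => ?_
  rw [ha, cinner_sum_irr a hψ]

/-- Clifford theory for a subgroup of index two: the sum of an irreducible character and its
conjugate is proportional to the restriction of an irreducible character. -/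
lemma exists_add_conjTwist_eq_smul_res {τ : S} (hτ : τ ∉ A) {θ : A → ℂ} (hθ : θ ∈ irr A) :
    ∃ ψ ∈ irr S, θ ∈ constituents A ψ ∧ ∃ e : ℂ, θ + conjTwist τ θ = e • res A ψ := by
  have hch := isChar_of_isIrrChar (mem_irr.1 hθ)
  have hch' := hch.conjTwist τ
  set f : A → ℂ := θ + conjTwist τ θ with hf
  have hfeq : f = res A (extZero f) := by ext a; simp
  have hinv : ∀ s : S, conjTwist s f = f := by
    intro s
    have hadd : conjTwist s f = conjTwist s θ + conjTwist s (conjTwist τ θ) := rfl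
    by_cases hs : s ∈ A
    · rw [hadd, hch.conjTwist_of_mem hs, hch'.conjTwist_of_mem hs]
    · rw [hadd, hch.conjTwist_eq hε hs hτ, conjTwist_conjTwist,
        hch.conjTwist_of_mem (sign_mul_mem_iff hε hτ hs), add_comm]
  have hclass : ∀ g x, extZero f (g * x * g⁻¹) = extZero f x := by
    intro g x
    by_cases hx : x ∈ A
    · have := congrFun (hinv g) ⟨x, hx⟩
      rw [conjTwist_apply] at this
      rw [← extZero_coe f ⟨x, hx⟩, ← extZero_coe f] at this
      simpa using this
    · have hx' : g * x * g⁻¹ ∉ A := by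
        rwa [← Subgroup.Normal.mem_comm_iff ‹A.Normal›, ← mul_assoc, inv_mul_cancel, one_mul]
      simp [extZero, hx, hx']
  have hsum := eq_sum_cinner hspan hclass
  have hcoef : ∀ ψ ∈ irr S, cinner (extZero f) ψ = cinner (res A ψ) θ := by
    intro ψ hψ
    have h1 := cinner_extZero hε hτ f ψ
    have h2 : cinner (conjTwist τ θ) (res A ψ) = cinner θ (res A ψ) := by
      conv_lhs => rw [← conjTwist_res (isChar_of_isIrrChar (mem_irr.1 hψ)) τ]
      exact cinner_conjTwist _ _ _
    rw [hf, map_add, LinearMap.add_apply, h2] at h1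
    rw [cinner_comm (res A ψ)]
    linear_combination h1 / 2
  obtain ⟨ψ, hψ, hne⟩ : ∃ ψ ∈ irr S, cinner (res A ψ) θ ≠ 0 := by
    by_contra! hcon
    have h0 : extZero f = 0 := by
      rw [hsum]
      exact Finset.sum_eq_zero fun ψ hψ => by rw [hcoef ψ hψ, hcon ψ hψ, zero_smul]
    have h1 : f = 0 := by rw [hfeq, h0, map_zero]
    have h2 : cinner f θ = 0 := by rw [h1, map_zero, LinearMap.zero_apply]
    rw [hf, map_add, LinearMap.add_apply, cinner_irr (mem_irr.1 hθ) (mem_irr.1 hθ),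
      cinner_irr (mem_irr.1 (conjTwist_mem_irr hθ τ)) (mem_irr.1 hθ), if_pos rfl] at h2
    split_ifs at h2 <;> norm_num at h2
  have hmem : θ ∈ constituents A ψ := Finset.mem_filter.2 ⟨hθ, hne⟩
  refine ⟨ψ, hψ, hmem, ∑ φ ∈ irr S, cinner (extZero f) φ, ?_⟩
  conv_lhs => rw [hfeq, hsum]
  rw [map_sum, Finset.sum_smul]
  refine Finset.sum_congr rfl fun φ hφ => ?_
  rw [map_smul]
  by_cases hφ0 : cinner (res A φ) θ = 0
  · rw [hcoef φ hφ, hφ0, zero_smul, zero_smul]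
  · rw [res_eq_of_mem_constituents hε hτ hφ hψ (Finset.mem_filter.2 ⟨hθ, hφ0⟩) hmem]

lemma constituents_eq_pair {τ : S} (hτ : τ ∉ A) {ψ : S → ℂ} (hψ : ψ ∈ irr S) {θ : A → ℂ}
    (hθ : θ ∈ constituents A ψ) : constituents A ψ = {θ, conjTwist τ θ} := by
  have hθ' := (Finset.mem_filter.1 hθ).1
  obtain ⟨φ, hφ, hmem, e, he⟩ := exists_add_conjTwist_eq_smul_res hε hspan hτ hθ'
  rw [res_eq_of_mem_constituents hε hτ hφ hψ hmem hθ] at he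
  have h2 := conjTwist_mem_irr hθ' τ
  have he0 : e ≠ 0 := by
    rintro rfl
    have h := congrArg (fun v => cinner v θ) he
    simp only [map_add, LinearMap.add_apply, zero_smul, map_zero, LinearMap.zero_apply] at h
    rw [cinner_irr (mem_irr.1 hθ') (mem_irr.1 hθ'),
      cinner_irr (mem_irr.1 h2) (mem_irr.1 hθ'), if_pos rfl] at h
    split_ifs at h <;> norm_num at h
  ext η
  rw [Finset.mem_insert, Finset.mem_singleton]
  constructor
  · intro hη
    obtain ⟨hη1, hη2⟩ := Finset.mem_filter.1 hη
    by_contra! hcon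
    have h := congrArg (fun v => cinner v η) he
    simp only [map_add, LinearMap.add_apply, map_smul, LinearMap.smul_apply] at h
    rw [cinner_irr (mem_irr.1 hθ') (mem_irr.1 hη1), cinner_irr (mem_irr.1 h2) (mem_irr.1 hη1),
      if_neg hcon.1.symm, if_neg hcon.2.symm, add_zero, eq_comm, smul_eq_mul, mul_eq_zero] at h
    exact h.elim he0 hη2
  · rintro (rfl | rfl)
    · exact hθ
    · exact conjTwist_mem_constituents hψ hθ τ

/-- Passing from a `2`-basic set of a finite group to a `2`-basic set of a subgroup of index two,
provided that classes of elements of even order of the subgroup do not split. -/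
theorem exists_isTwoBasicSet_of_index_two {τ : S} (hτ : τ ∉ A)
    (hsplit : ∀ x ∈ A, ¬ Odd (orderOf x) → ∃ σ ∉ A, σ * x * σ⁻¹ = x)
    {T : Finset (S → ℂ)} (hT : T ⊆ irr S)
    (hind : ∀ c : (S → ℂ) → ℤ, ∑ ψ ∈ T, c ψ • twoReg ψ = 0 → ∀ ψ ∈ T, c ψ = 0)
    (hgen : ∀ ψ ∈ irr S, twoReg ψ ∈ Submodule.span ℤ (twoReg '' (T : Set (S → ℂ)))) :
    ∃ B : Set (A → ℂ), IsTwoBasicSet A B := by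
  have htr : ∀ f : S → ℂ, twoReg (res A f) = res A (twoReg f) := by
    intro f
    ext a
    simp [twoReg]
  have htc : ∀ f : A → ℂ, twoReg (conjTwist τ f) = conjTwist τ (twoReg f) := by
    intro f
    ext a
    simp [twoReg, conjTwist_apply]
  have htt : ∀ f ∈ irr A, conjTwist τ (conjTwist τ f) = f := by
    intro f hf
    rw [conjTwist_conjTwist,
      (isChar_of_isIrrChar (mem_irr.1 hf)).conjTwist_of_mem (sign_mul_mem_iff hε hτ hτ)]
  have htadd : ∀ f g : A → ℂ, twoReg (f + g) = twoReg f + twoReg g := by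
    intro f g
    ext a
    by_cases h : Odd (orderOf a) <;> simp [twoReg, h]
  have hres0 : ∀ f : S → ℂ, res A (twoReg f) = 0 → twoReg f = 0 := by
    intro f hf
    ext x
    by_cases hx : Odd (orderOf x)
    · exact congrFun hf ⟨x, mem_of_odd_orderOf hε hx⟩
    · simp [twoReg, hx]
  let P : Finset (A → ℂ) := (irr A).filter fun θ => WellOrderingRel θ (conjTwist τ θ)
  let B : Finset (A → ℂ) := T.biUnion (constituents A) ∪ P
  have hBirr : B ⊆ irr A := by
    refine Finset.union_subset (Finset.biUnion_subset.2 fun ψ _ => Finset.filter_subset _ _)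
      (Finset.filter_subset _ _)
  refine ⟨(B : Set (A → ℂ)), fun f hf => mem_irr.1 (hBirr hf), ?_, ?_⟩
  · change LinearIndepOn ℤ twoReg (B : Set (A → ℂ))
    rw [linearIndepOn_finset_iff]
    intro c₀ hc₀
    let c : (A → ℂ) → ℤ := fun θ => if θ ∈ B then c₀ θ else 0
    suffices h : ∀ θ ∈ irr A, c θ = 0 by
      intro θ hθ
      simpa [c, hθ] using h θ (hBirr hθ)
    have hcB : ∀ θ, c θ ≠ 0 → θ ∈ B := by
      intro θ h
      by_contra hcon
      simp [c, hcon] at h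
    have hc : ∑ θ ∈ irr A, c θ • twoReg θ = 0 := by
      rw [← hc₀, ← Finset.sum_subset hBirr]
      · exact Finset.sum_congr rfl fun θ hθ => by simp [c, hθ]
      · intro θ _ hθ
        simp [c, hθ]
    have hcτ : ∀ θ ∈ irr A, c θ = c (conjTwist τ θ) := by
      have h1 : ∑ θ ∈ irr A, c (conjTwist τ θ) • twoReg θ = 0 := by
        have h2 : conjTwist τ (∑ θ ∈ irr A, c θ • twoReg θ) =
            ∑ θ ∈ irr A, c (conjTwist τ θ) • twoReg θ := by
          have h3 : conjTwist τ (∑ θ ∈ irr A, c θ • twoReg θ) =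
              ∑ θ ∈ irr A, c θ • conjTwist τ (twoReg θ) := by
            ext a
            simp [conjTwist_apply, Finset.sum_apply]
          rw [h3]
          refine Finset.sum_nbij' (conjTwist τ) (conjTwist τ)
            (fun θ hθ => conjTwist_mem_irr hθ τ) (fun θ hθ => conjTwist_mem_irr hθ τ)
            htt htt fun θ hθ => ?_
          rw [htt θ hθ, htc]
        rw [← h2, hc]
        rfl
      set F : A → ℂ := ∑ θ ∈ irr A, ((c θ : ℂ) - (c (conjTwist τ θ) : ℂ)) • θ with hF
      have hF0 : F = 0 := by
        ext a
        by_cases ha : Odd (orderOf a)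
        · have e1 := congrFun hc a
          have e2 := congrFun h1 a
          simp only [Finset.sum_apply, Pi.smul_apply, twoReg, ha, if_true,
            Pi.zero_apply] at e1 e2
          simp only [zsmul_eq_mul] at e1 e2
          simp only [hF, Finset.sum_apply, Pi.smul_apply, smul_eq_mul, sub_mul,
            Finset.sum_sub_distrib, e1, e2, Pi.zero_apply, sub_zero]
        · obtain ⟨σ, hσ, hσa⟩ := hsplit a a.2 (by rwa [Subgroup.orderOf_coe])
          have hfix : MulAut.conjNormal σ a = a := by
            ext
            simpa using hσa
          have hFσ : F a = ∑ θ ∈ irr A, ((c θ : ℂ) - (c (conjTwist τ θ) : ℂ)) *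
              conjTwist τ θ a := by
            conv_lhs => rw [← hfix]
            rw [hF, Finset.sum_apply]
            refine Finset.sum_congr rfl fun θ hθ => ?_
            rw [← (isChar_of_isIrrChar (mem_irr.1 hθ)).conjTwist_eq hε hσ hτ]
            rfl
          have hFτ : ∑ θ ∈ irr A, ((c θ : ℂ) - (c (conjTwist τ θ) : ℂ)) *
              conjTwist τ θ a = ∑ θ ∈ irr A, -(((c θ : ℂ) - (c (conjTwist τ θ) : ℂ)) * θ a) := by
            refine Finset.sum_nbij' (conjTwist τ) (conjTwist τ)
              (fun θ hθ => conjTwist_mem_irr hθ τ) (fun θ hθ => conjTwist_mem_irr hθ τ)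
              htt htt fun θ hθ => ?_
            rw [htt θ hθ]
            ring
          rw [hFτ, Finset.sum_neg_distrib] at hFσ
          have : ∑ θ ∈ irr A, ((c θ : ℂ) - (c (conjTwist τ θ) : ℂ)) * θ a = F a := by
            rw [hF, Finset.sum_apply]
            rfl
          rw [this] at hFσ
          rw [Pi.zero_apply]
          linear_combination hFσ / 2
      intro θ hθ
      have h4 := cinner_sum_irr (fun θ => (c θ : ℂ) - (c (conjTwist τ θ) : ℂ)) hθ
      rw [← hF, hF0, map_zero, LinearMap.zero_apply] at h4
      exact_mod_cast (sub_eq_zero.1 h4.symm)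
    have hcT : ∀ θ ∈ irr A, c θ ≠ 0 → ∃ ψ ∈ T, θ ∈ constituents A ψ := by
      intro θ hθ hne
      rcases Finset.mem_union.1 (hcB _ hne) with h | h
      · exact Finset.mem_biUnion.1 h
      rcases Finset.mem_union.1 (hcB _ (hcτ θ hθ ▸ hne)) with h' | h'
      · obtain ⟨ψ, hψ, hmem⟩ := Finset.mem_biUnion.1 h'
        exact ⟨ψ, hψ, htt θ hθ ▸ conjTwist_mem_constituents (hT hψ) hmem τ⟩
      · have r1 := (Finset.mem_filter.1 h).2
        have r2 := (Finset.mem_filter.1 h').2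
        rw [htt θ hθ] at r2
        exact absurd r2 (asymm r1)
    have hinj : ∀ ψ ∈ T, ∀ φ ∈ T, res A ψ = res A φ → ψ = φ := by
      intro ψ hψ φ hφ h
      by_contra hne
      have h1 : twoReg ψ = twoReg φ := by
        ext x
        by_cases hx : Odd (orderOf x)
        · simpa [twoReg, hx] using congrFun h ⟨x, mem_of_odd_orderOf hε hx⟩
        · simp [twoReg, hx]
      have h2 := hind (fun η => if η = ψ then 1 else if η = φ then -1 else 0) (by
        rw [← Finset.sum_subset (s₁ := {ψ, φ})
          (Finset.insert_subset hψ (Finset.singleton_subset_iff.2 hφ)), Finset.sum_pair hne]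
        · simp [h1, Ne.symm hne]
        · intro η _ hη
          simp only [Finset.mem_insert, Finset.mem_singleton, not_or] at hη
          simp [hη]) ψ hψ
      simp at h2
    have hconst : ∀ ψ ∈ T, ∀ θ ∈ constituents A ψ, ∀ η ∈ constituents A ψ, c θ = c η := by
      intro ψ hψ θ hθ η hη
      rw [constituents_eq_pair hε hspan hτ (hT hψ) hθ, Finset.mem_insert,
        Finset.mem_singleton] at hη
      rcases hη with rfl | rfl
      · rfl
      · exact hcτ θ (Finset.mem_filter.1 hθ).1
    have hval : ∀ ψ : S → ℂ, ∃ d : ℤ, ψ ∈ T → ∀ θ ∈ constituents A ψ, c θ = d := by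
      intro ψ
      by_cases hψ : ψ ∈ T ∧ (constituents A ψ).Nonempty
      · obtain ⟨hψ, η, hη⟩ := hψ
        exact ⟨c η, fun _ θ hθ => hconst ψ hψ θ hθ η hη⟩
      · exact ⟨0, fun h θ hθ => absurd ⟨h, θ, hθ⟩ hψ⟩
    choose d hd using hval
    have hdT : ∑ ψ ∈ T, d ψ • twoReg ψ = 0 := by
      have h1 : res A (twoReg (∑ ψ ∈ T, d ψ • ψ)) = ∑ θ ∈ irr A, c θ • twoReg θ := by
        rw [← htr, map_sum]
        have h2 : ∑ ψ ∈ T, res A (d ψ • ψ) = ∑ θ ∈ T.biUnion (constituents A), c θ • θ := by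
          rw [Finset.sum_biUnion]
          · refine Finset.sum_congr rfl fun ψ hψ => ?_
            rw [map_zsmul, res_eq_sum_constituents hε hτ (hT hψ), Finset.smul_sum]
            exact Finset.sum_congr rfl fun θ hθ => by rw [hd ψ hψ θ hθ]
          · intro ψ hψ φ hφ hne
            rw [Function.onFun, Finset.disjoint_left]
            intro θ h1 h2
            exact hne (hinj ψ hψ φ hφ
              (res_eq_of_mem_constituents hε hτ (hT hψ) (hT hφ) h1 h2))
        have h3 : ∑ θ ∈ T.biUnion (constituents A), c θ • θ = ∑ θ ∈ irr A, c θ • θ := by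
          refine Finset.sum_subset
            (Finset.biUnion_subset.2 fun ψ _ => Finset.filter_subset _ _) ?_
          intro θ hθ hθ'
          by_contra hne
          refine hθ' (Finset.mem_biUnion.2 (hcT θ hθ fun h => hne ?_))
          rw [h, zero_smul]
        rw [h2, h3]
        ext a
        by_cases ha : Odd (orderOf a) <;> simp [twoReg, ha, Finset.sum_apply]
      have h2 := hres0 _ (h1.trans hc)
      rw [← h2]
      ext x
      by_cases hx : Odd (orderOf x) <;> simp [twoReg, hx, Finset.sum_apply]
    intro θ hθ
    by_contra hne
    obtain ⟨ψ, hψ, hmem⟩ := hcT θ hθ hne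
    exact hne ((hd ψ hψ θ hmem).trans (hind d hdT ψ hψ))
  · refine le_antisymm (Submodule.span_mono (Set.image_mono fun f hf => mem_irr.1 (hBirr hf))) ?_
    rw [Submodule.span_le]
    rintro _ ⟨θ, hθ, rfl⟩
    have hθ : θ ∈ irr A := mem_irr.2 hθ
    obtain ⟨ψ, hψ, hmem, -⟩ := exists_add_conjTwist_eq_smul_res hε hspan hτ hθ
    have hB : ∀ η ∈ B, twoReg η ∈ Submodule.span ℤ (twoReg '' (B : Set (A → ℂ))) :=
      fun η hη => Submodule.subset_span ⟨η, hη, rfl⟩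
    have hψB : twoReg (res A ψ) ∈ Submodule.span ℤ (twoReg '' (B : Set (A → ℂ))) := by
      have h1 := Submodule.mem_map_of_mem (f := (res A).restrictScalars ℤ) (hgen ψ hψ)
      rw [htr]
      refine Submodule.map_span_le _ _ _ |>.2 ?_ h1
      rintro _ ⟨φ, hφ, rfl⟩
      rw [LinearMap.restrictScalars_apply, ← htr, res_eq_sum_constituents hε hτ (hT hφ)]
      have h2 : twoReg (∑ η ∈ constituents A φ, η) = ∑ η ∈ constituents A φ, twoReg η := by
        ext a
        by_cases ha : Odd (orderOf a) <;> simp [twoReg, ha, Finset.sum_apply]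
      rw [h2]
      exact Submodule.sum_mem _ fun η hη =>
        hB η (Finset.mem_union_left _ (Finset.mem_biUnion.2 ⟨φ, hφ, hη⟩))
    have hsum := res_eq_sum_constituents hε hτ hψ
    rw [constituents_eq_pair hε hspan hτ hψ hmem] at hsum
    rcases trichotomous_of WellOrderingRel θ (conjTwist τ θ) with h | h | h
    · exact hB θ (Finset.mem_union_right _ (Finset.mem_filter.2 ⟨hθ, h⟩))
    · rw [← h, Finset.pair_eq_singleton, Finset.sum_singleton] at hsum
      exact hsum ▸ hψB
    · have hne : θ ≠ conjTwist τ θ := by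
        intro heq
        rw [← heq] at h
        exact irrefl _ h
      rw [Finset.sum_pair hne] at hsum
      have h1 : twoReg θ = twoReg (res A ψ) - twoReg (conjTwist τ θ) := by
        rw [hsum, htadd, add_sub_cancel_right]
      change twoReg θ ∈ _
      rw [h1]
      refine Submodule.sub_mem _ hψB (hB _ (Finset.mem_union_right _ (Finset.mem_filter.2 ⟨?_, ?_⟩)))
      · exact conjTwist_mem_irr hθ τ
      · rwa [htt θ hθ]

end IndexTwo

section YoungPermutationCharacters

variable {Ω : Type} [Fintype Ω]
variable {ι κ : Type} [Fintype ι] [Fintype κ]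

/-- The colourings of `Ω` with `α i` points of colour `i`. -/
noncomputable def colorings (Ω : Type) [Fintype Ω] (α : ι → ℕ) : Finset (Ω → ι) :=
  Finset.univ.filter fun f => ∀ i, (Finset.univ.filter fun x => f x = i).card = α i

lemma mem_colorings {α : ι → ℕ} {f : Ω → ι} :
    f ∈ colorings Ω α ↔ ∀ i, (Finset.univ.filter fun x => f x = i).card = α i := by
  simp [colorings]

lemma comp_perm_mem_colorings {α : ι → ℕ} {f : Ω → ι} (hf : f ∈ colorings Ω α)
    (σ : Equiv.Perm Ω) : f ∘ σ ∈ colorings Ω α := by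
  rw [mem_colorings] at hf ⊢
  intro i
  rw [← hf i]
  refine Finset.card_bij' (fun x _ => σ x) (fun x _ => σ.symm x) ?_ ?_ ?_ ?_ <;> simp

/-- The permutation character of the symmetric group on the colourings of content `α`. -/
noncomputable def youngChar (Ω : Type) [Fintype Ω] (α : ι → ℕ) : Equiv.Perm Ω → ℂ :=
  fun σ => (((colorings Ω α).filter fun f => f ∘ σ = f).card : ℂ)

omit [Fintype Ω] [Fintype ι] in
lemma comp_perm_inv_eq_iff (f : Ω → ι) (σ : Equiv.Perm Ω) :
    f ∘ (σ⁻¹ : Equiv.Perm Ω) = f ↔ f ∘ σ = f := by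
  constructor <;> intro h
  · conv_lhs => rw [← h]
    ext x
    simp
  · conv_lhs => rw [← h]
    ext x
    simp

lemma isChar_youngChar (α : ι → ℕ) : IsChar (youngChar Ω α) := by
  let act : MulAction (Equiv.Perm Ω) (colorings Ω α) :=
    { smul := fun σ f => ⟨f.1 ∘ (σ⁻¹ : Equiv.Perm Ω), comp_perm_mem_colorings f.2 _⟩
      one_smul := fun f => by
        apply Subtype.ext
        change f.1 ∘ _ = _
        ext x; simp
      mul_smul := fun σ τ f => by
        apply Subtype.ext
        change f.1 ∘ _ = (f.1 ∘ _) ∘ _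
        ext x; simp }
  have hact : ∀ (σ : Equiv.Perm Ω) (f : colorings Ω α), σ • f = f ↔ f.1 ∘ σ = f.1 := by
    intro σ f
    rw [← comp_perm_inv_eq_iff, Subtype.ext_iff]
    rfl
  convert isChar_fixedPoints (G := Equiv.Perm Ω) (colorings Ω α) using 1
  ext σ
  rw [youngChar]
  congr 1
  refine Finset.card_bij' (fun f hf => ⟨f, (Finset.mem_filter.1 hf).1⟩) (fun f _ => f.1)
    ?_ ?_ ?_ ?_
  · intro f hf
    simp only [Finset.mem_filter, Finset.mem_univ, true_and]
    rw [hact]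
    exact (Finset.mem_filter.1 hf).2
  · intro f hf
    simp only [Finset.mem_filter, Finset.mem_univ, true_and] at hf
    rw [hact] at hf
    exact Finset.mem_filter.2 ⟨f.2, hf⟩
  · simp
  · simp

/-- The sign character of the symmetric group with complex values. -/
noncomputable def signHom (Ω : Type) [Fintype Ω] : Equiv.Perm Ω →* ℂ :=
  ((Int.castRingHom ℂ : ℤ →* ℂ).comp (Units.coeHom ℤ)).comp Equiv.Perm.sign

lemma signHom_apply (σ : Equiv.Perm Ω) :
    signHom Ω σ = ((Equiv.Perm.sign σ : ℤ) : ℂ) := rfl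

lemma isChar_signHom_mul_youngChar (β : κ → ℕ) :
    IsChar ((fun σ => signHom Ω σ) * youngChar Ω β) :=
  (isChar_linear (signHom Ω)).mul (isChar_youngChar β)

omit [Fintype ι] in
lemma sum_sign_stabilizer (p : Ω → ι) :
    (∑ σ : Equiv.Perm Ω, if p ∘ σ = p then signHom Ω σ else 0) =
      if Function.Injective p then 1 else 0 := by
  split_ifs with hp
  · rw [Finset.sum_eq_single 1]
    · simp
    · intro σ _ hσ
      rw [if_neg]
      intro h
      apply hσ
      ext x
      exact hp (congrFun h x)
    · simp
  · rw [Function.Injective] at hp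
    push Not at hp
    obtain ⟨a, b, hab, hne⟩ := hp
    have hswap : p ∘ (Equiv.swap a b) = p := by
      ext x
      by_cases h : x = a
      · simp [h, hab]
      · by_cases hb : x = b
        · simp [hb, hab]
        · simp [Equiv.swap_apply_of_ne_of_ne h hb]
    have key : (∑ σ : Equiv.Perm Ω, if p ∘ σ = p then signHom Ω σ else 0) =
        -∑ σ : Equiv.Perm Ω, if p ∘ σ = p then signHom Ω σ else 0 := by
      conv_lhs => rw [← Equiv.sum_comp (Equiv.mulLeft (Equiv.swap a b))]
      rw [← Finset.sum_neg_distrib]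
      refine Finset.sum_congr rfl fun σ _ => ?_
      have h1 : p ∘ (Equiv.mulLeft (Equiv.swap a b) σ : Equiv.Perm Ω) = p ∘ σ := by
        change p ∘ (Equiv.swap a b ∘ σ) = _
        rw [← Function.comp_assoc, hswap]
      rw [h1]
      split_ifs
      · simp [signHom_apply, Equiv.Perm.sign_swap hne]
      · simp
    exact self_eq_neg.1 key

/-- The pairs of colourings that jointly separate the points. -/
noncomputable def separatingPairs (Ω : Type) [Fintype Ω] (α : ι → ℕ) (β : κ → ℕ) :
    Finset ((Ω → ι) × (Ω → κ)) :=
  (colorings Ω α ×ˢ colorings Ω β).filter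
    fun p => Function.Injective fun x => (p.1 x, p.2 x)

lemma mem_separatingPairs {α : ι → ℕ} {β : κ → ℕ} {p : (Ω → ι) × (Ω → κ)} :
    p ∈ separatingPairs Ω α β ↔ (p.1 ∈ colorings Ω α ∧ p.2 ∈ colorings Ω β) ∧
      Function.Injective fun x => (p.1 x, p.2 x) := by
  simp [separatingPairs]

lemma cinner_youngChar_sign (α : ι → ℕ) (β : κ → ℕ) :
    cinner (youngChar Ω α) ((fun σ => signHom Ω σ) * youngChar Ω β) =
      (Nat.card (Equiv.Perm Ω) : ℂ)⁻¹ * (separatingPairs Ω α β).card := by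
  rw [cinner_apply]
  congr 1
  have h1 : ∀ σ : Equiv.Perm Ω, youngChar Ω α σ *
      ((fun σ => signHom Ω σ) * youngChar Ω β) σ⁻¹ =
      ∑ p ∈ colorings Ω α ×ˢ colorings Ω β,
        if (fun x => (p.1 x, p.2 x)) ∘ σ = (fun x => (p.1 x, p.2 x)) then signHom Ω σ else 0 := by
    intro σ
    have h2 : ∀ p : (Ω → ι) × (Ω → κ),
        (fun x => (p.1 x, p.2 x)) ∘ σ = (fun x => (p.1 x, p.2 x)) ↔
          p.1 ∘ σ = p.1 ∧ p.2 ∘ σ = p.2 := by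
      intro p
      simp only [funext_iff, Function.comp_apply, Prod.ext_iff, forall_and]
    simp only [h2]
    rw [← Finset.sum_filter, Finset.filter_product (fun f : Ω → ι => f ∘ σ = f)
      (fun f : Ω → κ => f ∘ σ = f), Finset.sum_const, Finset.card_product, Pi.mul_apply]
    simp only [youngChar, comp_perm_inv_eq_iff, signHom_apply, Equiv.Perm.sign_inv]
    rw [nsmul_eq_mul]
    push_cast
    ring
  simp only [h1]
  rw [Finset.sum_comm]
  rw [separatingPairs, Finset.card_filter, Nat.cast_sum]
  refine Finset.sum_congr rfl fun p _ => ?_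
  rw [Nat.cast_ite, Nat.cast_one, Nat.cast_zero]
  convert sum_sign_stabilizer fun x => (p.1 x, p.2 x)

/-- Partial sums of the conjugate composition: the number of cells of the diagram of `α`
in the first `k` columns. -/
def colSum (α : ι → ℕ) (k : ℕ) : ℕ := ∑ i, min (α i) k

/-- The column lengths of the diagram with rows `α`. -/
noncomputable def colLen (N : ℕ) (α : ι → ℕ) (j : Fin N) : ℕ :=
  (Finset.univ.filter fun i => (j : ℕ) < α i).card

lemma card_lt_le_colSum {N : ℕ} {α : ι → ℕ} {f : Ω → ι} {g : Ω → Fin N}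
    (hf : f ∈ colorings Ω α) (hinj : Function.Injective fun x => (f x, g x)) (i : ι) (k : ℕ) :
    (Finset.univ.filter fun x => f x = i ∧ (g x : ℕ) < k).card ≤ min (α i) k := by
  refine le_min ?_ ?_
  · rw [← mem_colorings.1 hf i]
    exact Finset.card_le_card fun x => by simp +contextual
  · rw [← Finset.card_range k]
    refine Finset.card_le_card_of_injOn (fun x => (g x : ℕ)) ?_ ?_
    · intro x hx
      simp only [Finset.coe_filter, Finset.mem_univ, true_and, Set.mem_ofPred_eq] at hx
      simpa using hx.2
    · intro x hx y hy hxy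
      simp only [Finset.coe_filter, Finset.mem_univ, true_and, Set.mem_ofPred_eq] at hx hy
      exact hinj (Prod.ext (hx.1.trans hy.1.symm) (Fin.ext hxy))

lemma card_lt_eq_sum {N : ℕ} (f : Ω → ι) (g : Ω → Fin N) (k : ℕ) :
    (Finset.univ.filter fun x => (g x : ℕ) < k).card =
      ∑ i, (Finset.univ.filter fun x => f x = i ∧ (g x : ℕ) < k).card := by
  rw [Finset.card_eq_sum_card_fiberwise (f := f) (t := Finset.univ) (by simp)]
  refine Finset.sum_congr rfl fun i _ => ?_
  congr 1
  ext x
  simp [and_comm]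

lemma card_lt_eq_colSum {N : ℕ} {α : ι → ℕ} (hα : ∀ i, α i ≤ N) {g : Ω → Fin N}
    (hg : g ∈ colorings Ω (colLen N α)) (k : ℕ) :
    (Finset.univ.filter fun x => (g x : ℕ) < k).card = colSum α k := by
  have h1 : (Finset.univ.filter fun x => (g x : ℕ) < k).card =
      ∑ j ∈ Finset.univ.filter (fun j : Fin N => (j : ℕ) < k), colLen N α j := by
    rw [Finset.card_eq_sum_card_fiberwise (f := g)
      (t := Finset.univ.filter (fun j : Fin N => (j : ℕ) < k)) (by intro x; simp)]
    refine Finset.sum_congr rfl fun j hj => ?_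
    rw [← mem_colorings.1 hg j]
    congr 1
    ext x
    simp only [Finset.mem_filter, Finset.mem_univ, true_and] at hj ⊢
    constructor
    · exact fun h => h.2
    · rintro rfl
      exact ⟨hj, rfl⟩
  rw [h1, colSum]
  simp only [colLen, Finset.card_filter]
  rw [Finset.sum_comm]
  refine Finset.sum_congr rfl fun i _ => ?_
  rw [← Finset.card_filter, Finset.filter_filter]
  have h2 : (Finset.univ.filter fun j : Fin N => (j : ℕ) < k ∧ (j : ℕ) < α i) =
      Finset.univ.filter fun j : Fin N => (j : ℕ) < min (α i) k := by
    ext j; simp [and_comm]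
  rw [h2]
  have h3 := Fin.card_filter_val_lt (n := N) (m := min (α i) k)
  have := hα i
  have h4 : min N (min (α i) k) = min (α i) k := by omega
  rw [h4] at h3
  convert h3

lemma colSum_le_of_mem_separatingPairs {N : ℕ} {α : ι → ℕ} {β : κ → ℕ} (hβ : ∀ i, β i ≤ N)
    {p : (Ω → ι) × (Ω → Fin N)} (hp : p ∈ separatingPairs Ω α (colLen N β)) (k : ℕ) :
    colSum β k ≤ colSum α k := by
  rw [mem_separatingPairs] at hp
  obtain ⟨⟨hf, hg⟩, hinj⟩ := hp
  rw [← card_lt_eq_colSum hβ hg, card_lt_eq_sum p.1]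
  exact Finset.sum_le_sum fun i _ => card_lt_le_colSum hf hinj i k

lemma mem_separatingPairs_colLen {N : ℕ} {α : ι → ℕ} (hα : ∀ i, α i ≤ N)
    (hN : Fintype.card Ω = ∑ i, α i)
    (p : (Ω → ι) × (Ω → Fin N)) : p ∈ separatingPairs Ω α (colLen N α) ↔
      (Function.Injective fun x => (p.1 x, p.2 x)) ∧ ∀ x, (p.2 x : ℕ) < α (p.1 x) := by
  rw [mem_separatingPairs]
  constructor
  · rintro ⟨⟨hf, hg⟩, hinj⟩
    refine ⟨hinj, fun x => ?_⟩
    have h1 := card_lt_eq_colSum hα hg (α (p.1 x))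
    rw [card_lt_eq_sum p.1, colSum] at h1
    have h2 := (Finset.sum_eq_sum_iff_of_le
      fun i _ => card_lt_le_colSum hf hinj i (α (p.1 x))).1 h1 (p.1 x) (Finset.mem_univ _)
    rw [min_self, ← mem_colorings.1 hf (p.1 x)] at h2
    have h3 := Finset.eq_of_subset_of_card_le (fun y => by simp +contextual) h2.ge
    have h4 : x ∈ Finset.univ.filter fun y => p.1 y = p.1 x := by simp
    rw [← h3, Finset.mem_filter] at h4
    rw [mem_colorings.1 hf] at h4
    exact h4.2.2
  · rintro ⟨hinj, hlt⟩
    have hsub : Finset.univ.image (fun x => (p.1 x, p.2 x)) ⊆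
        Finset.univ.filter fun q : ι × Fin N => (q.2 : ℕ) < α q.1 := by
      intro q hq
      obtain ⟨x, -, rfl⟩ := Finset.mem_image.1 hq
      simpa using hlt x
    have hfib : ∀ i, (Finset.univ.filter fun j : Fin N => (j : ℕ) < α i).card = α i := by
      intro i
      have h3 := Fin.card_filter_val_lt (n := N) (m := α i)
      rw [min_eq_right (hα i)] at h3
      convert h3
    have hcard : (Finset.univ.filter fun q : ι × Fin N => (q.2 : ℕ) < α q.1).card =
        Fintype.card Ω := by
      rw [hN, Finset.card_filter, Fintype.sum_prod_type]
      refine Finset.sum_congr rfl fun i _ => ?_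
      rw [← Finset.card_filter, hfib]
    have himg := Finset.eq_of_subset_of_card_le hsub (by
      rw [hcard, Finset.card_image_of_injective _ hinj, Finset.card_univ])
    have hex : ∀ (i : ι) (j : Fin N), (j : ℕ) < α i → ∃ x, p.1 x = i ∧ p.2 x = j := by
      intro i j hij
      have : (i, j) ∈ Finset.univ.filter fun q : ι × Fin N => (q.2 : ℕ) < α q.1 := by simpa
      rw [← himg, Finset.mem_image] at this
      obtain ⟨x, -, hx⟩ := this
      exact ⟨x, congrArg Prod.fst hx, congrArg Prod.snd hx⟩
    refine ⟨⟨?_, ?_⟩, hinj⟩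
    · rw [mem_colorings]
      intro i
      rw [← hfib i]
      refine Finset.card_bij (fun x _ => p.2 x) ?_ ?_ ?_
      · intro x hx
        simp only [Finset.mem_filter, Finset.mem_univ, true_and] at hx ⊢
        exact hx ▸ hlt x
      · intro x hx y hy hxy
        simp only [Finset.mem_filter, Finset.mem_univ, true_and] at hx hy
        exact hinj (Prod.ext (hx.trans hy.symm) hxy)
      · intro j hj
        obtain ⟨x, hx, hx'⟩ := hex i j (by simpa using hj)
        exact ⟨x, by simpa using hx, hx'⟩
    · rw [mem_colorings]
      intro j
      rw [colLen]
      refine Finset.card_bij (fun x _ => p.1 x) ?_ ?_ ?_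
      · intro x hx
        simp only [Finset.mem_filter, Finset.mem_univ, true_and] at hx ⊢
        exact hx ▸ hlt x
      · intro x hx y hy hxy
        simp only [Finset.mem_filter, Finset.mem_univ, true_and] at hx hy
        exact hinj (Prod.ext hxy (hx.trans hy.symm))
      · intro i hi
        obtain ⟨x, hx, hx'⟩ := hex i j (by simpa using hi)
        exact ⟨x, by simpa using hx', hx⟩

lemma card_separatingPairs_colLen {N : ℕ} {α : ι → ℕ} (hα : ∀ i, α i ≤ N)
    (hN : Fintype.card Ω = ∑ i, α i) :
    (separatingPairs Ω α (colLen N α)).card = (Fintype.card Ω).factorial := by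
  have hcard : Fintype.card {q : ι × Fin N // (q.2 : ℕ) < α q.1} = Fintype.card Ω := by
    rw [Fintype.card_subtype, hN, Finset.card_filter, Fintype.sum_prod_type]
    refine Finset.sum_congr rfl fun i _ => ?_
    rw [← Finset.card_filter]
    have h3 := Fin.card_filter_val_lt (n := N) (m := α i)
    rw [min_eq_right (hα i)] at h3
    convert h3
  have h1 : Fintype.card (Ω ↪ {q : ι × Fin N // (q.2 : ℕ) < α q.1}) =
      (Fintype.card Ω).factorial := by
    rw [Fintype.card_embedding_eq, hcard, Nat.descFactorial_self]
  rw [← h1, ← Finset.card_univ]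
  refine Finset.card_bij'
    (fun p hp => ⟨fun x => ⟨(p.1 x, p.2 x), ((mem_separatingPairs_colLen hα hN p).1 hp).2 x⟩,
      fun x y hxy => ((mem_separatingPairs_colLen hα hN p).1 hp).1 (Subtype.ext_iff.1 hxy)⟩)
    (fun e _ => (fun x => (e x).1.1, fun x => (e x).1.2)) ?_ ?_ ?_ ?_
  · simp
  · intro e _
    rw [mem_separatingPairs_colLen hα hN]
    exact ⟨fun x y hxy => e.injective (Subtype.ext hxy), fun x => (e x).2⟩
  · intro p hp
    rfl
  · intro e _
    rfl

end YoungPermutationCharacters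

section SpechtCharacters

lemma exists_common_constituent {G : Type} [Group G] [Fintype G] {f g : G → ℂ}
    (hf : IsChar f) (hg : IsChar g) (h : cinner f g = 1) :
    ∃ ψ ∈ irr G, cinner f ψ = 1 ∧ cinner g ψ = 1 := by
  obtain ⟨a, rfl⟩ := hf.exists_mult
  obtain ⟨b, rfl⟩ := hg.exists_mult
  rw [cinner_sum_irr_sum] at h
  have h1 : ∑ θ ∈ irr G, a θ * b θ = 1 := by exact_mod_cast h
  obtain ⟨ψ, hψ, hne⟩ := Finset.exists_ne_zero_of_sum_ne_zero (h1.trans_ne one_ne_zero)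
  have h2 := Finset.single_le_sum (f := fun θ => a θ * b θ) (fun _ _ => Nat.zero_le _) hψ
  have h3 : a ψ * b ψ = 1 := by
    have : a ψ * b ψ ≤ 1 := h2.trans h1.le
    omega
  obtain ⟨h4, h5⟩ := mul_eq_one.1 h3
  exact ⟨ψ, hψ, by rw [cinner_sum_irr _ hψ, h4, Nat.cast_one],
    by rw [cinner_sum_irr _ hψ, h5, Nat.cast_one]⟩

lemma cinner_ne_zero_of_common_constituent {G : Type} [Group G] [Fintype G] {f g ψ : G → ℂ}
    (hf : IsChar f) (hg : IsChar g) (hψ : ψ ∈ irr G) (h1 : cinner f ψ ≠ 0)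
    (h2 : cinner g ψ ≠ 0) : cinner f g ≠ 0 := by
  obtain ⟨a, rfl⟩ := hf.exists_mult
  obtain ⟨b, rfl⟩ := hg.exists_mult
  rw [cinner_sum_irr _ hψ] at h1 h2
  rw [cinner_sum_irr_sum]
  norm_cast at h1 h2 ⊢
  have h3 := Finset.single_le_sum (f := fun θ => a θ * b θ) (fun _ _ => Nat.zero_le _) hψ
  have h4 : 0 < a ψ * b ψ := Nat.mul_pos (Nat.pos_of_ne_zero h1) (Nat.pos_of_ne_zero h2)
  exact (h4.trans_le h3).ne'

variable {N : ℕ}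

/-- The row lengths of a partition, indexed by its parts with multiplicity. -/
def rows (p : N.Partition) (i : p.parts.ToType) : ℕ := i.1

lemma sum_rows_apply (p : N.Partition) (F : ℕ → ℕ) :
    ∑ i, F (rows p i) = (p.parts.map F).sum := by
  rw [← Multiset.map_univ p.parts F]
  rfl

lemma sum_rows (p : N.Partition) : ∑ i, rows p i = N := by
  refine (sum_rows_apply p id).trans ?_
  rw [Multiset.map_id, p.parts_sum]

lemma rows_mem (p : N.Partition) (i : p.parts.ToType) : rows p i ∈ p.parts :=
  Multiset.coe_mem

lemma rows_le (p : N.Partition) (i : p.parts.ToType) : rows p i ≤ N :=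
  p.le_of_mem_parts (rows_mem p i)

lemma colSum_succ {ι : Type} [Fintype ι] (α : ι → ℕ) (k : ℕ) :
    colSum α (k + 1) = colSum α k + ∑ i, if k < α i then 1 else 0 := by
  rw [colSum, colSum, ← Finset.sum_add_distrib]
  refine Finset.sum_congr rfl fun i _ => ?_
  split_ifs <;> omega

lemma count_eq_of_colSum (p : N.Partition) (k : ℕ) :
    p.parts.count (k + 1) + colSum (rows p) (k + 2) + colSum (rows p) k =
      2 * colSum (rows p) (k + 1) := by
  have h1 : p.parts.count (k + 1) = ∑ i, if rows p i = k + 1 then 1 else 0 := by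
    rw [sum_rows_apply p fun a => if a = k + 1 then 1 else 0]
    induction p.parts using Multiset.induction_on with
    | empty => simp
    | cons a s ih =>
      rw [Multiset.map_cons, Multiset.sum_cons, ← ih]
      by_cases h : a = k + 1
      · simp [h, add_comm]
      · simp [h, Ne.symm h]
  rw [colSum_succ _ (k + 1), colSum_succ _ k, h1]
  have h2 : ∑ i, (if k < rows p i then 1 else 0) =
      (∑ i, if rows p i = k + 1 then 1 else 0) + ∑ i, if k + 1 < rows p i then 1 else 0 := by
    rw [← Finset.sum_add_distrib]
    refine Finset.sum_congr rfl fun i _ => ?_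
    split_ifs <;> omega
  omega

lemma eq_of_colSum_eq {p q : N.Partition}
    (h : ∀ k ∈ Finset.range (N + 2), colSum (rows p) k = colSum (rows q) k) : p = q := by
  apply Nat.Partition.ext
  apply Multiset.ext.2
  intro a
  by_cases ha : a ≤ N
  · cases a with
    | zero =>
      rw [Multiset.count_eq_zero.2 fun h0 => (p.parts_pos h0).ne' rfl,
        Multiset.count_eq_zero.2 fun h0 => (q.parts_pos h0).ne' rfl]
    | succ k =>
      have h1 := count_eq_of_colSum p k
      have h2 := count_eq_of_colSum q k
      rw [h k (by simp; omega), h (k + 1) (by simp; omega), h (k + 2) (by simp; omega)] at h1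
      omega
  · rw [Multiset.count_eq_zero.2 fun h0 => ha (p.le_of_mem_parts h0),
      Multiset.count_eq_zero.2 fun h0 => ha (q.le_of_mem_parts h0)]

/-- A numerical invariant which is strictly monotone for the dominance order. -/
def potential {ι : Type} [Fintype ι] (N : ℕ) (α : ι → ℕ) : ℕ :=
  ∑ k ∈ Finset.range (N + 2), colSum α k

lemma potential_lt_of_ne {p q : N.Partition} (hne : p ≠ q)
    (h : ∀ k, colSum (rows p) k ≤ colSum (rows q) k) :
    potential N (rows p) < potential N (rows q) := by
  refine lt_of_le_of_ne (Finset.sum_le_sum fun k _ => h k) fun heq => hne ?_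
  exact eq_of_colSum_eq ((Finset.sum_eq_sum_iff_of_le fun k _ => h k).1 heq)

variable {Ω : Type} [Fintype Ω]

lemma exists_spechtChar (p : (Fintype.card Ω).Partition) :
    ∃ ψ ∈ irr (Equiv.Perm Ω), cinner (youngChar Ω (rows p)) ψ = 1 ∧
      cinner ((fun σ => signHom Ω σ) * youngChar Ω (colLen (Fintype.card Ω) (rows p))) ψ = 1 := by
  refine exists_common_constituent (isChar_youngChar _) (isChar_signHom_mul_youngChar _) ?_
  rw [cinner_youngChar_sign, card_separatingPairs_colLen (rows_le p) (sum_rows p).symm,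
    Nat.card_eq_fintype_card, Fintype.card_perm, inv_mul_cancel₀]
  exact_mod_cast Nat.factorial_ne_zero _

/-- The irreducible character of the symmetric group labelled by a partition. -/
noncomputable def spechtChar (p : (Fintype.card Ω).Partition) : Equiv.Perm Ω → ℂ :=
  (exists_spechtChar p).choose

lemma spechtChar_mem_irr (p : (Fintype.card Ω).Partition) :
    spechtChar p ∈ irr (Equiv.Perm Ω) :=
  (exists_spechtChar p).choose_spec.1

lemma cinner_youngChar_spechtChar (p : (Fintype.card Ω).Partition) :
    cinner (youngChar Ω (rows p)) (spechtChar p) = 1 :=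
  (exists_spechtChar p).choose_spec.2.1

lemma cinner_sign_youngChar_spechtChar (p : (Fintype.card Ω).Partition) :
    cinner ((fun σ => signHom Ω σ) * youngChar Ω (colLen (Fintype.card Ω) (rows p)))
      (spechtChar p) = 1 :=
  (exists_spechtChar p).choose_spec.2.2

lemma colSum_le_of_cinner_ne_zero {ι : Type} [Fintype ι] {α : ι → ℕ}
    {p : (Fintype.card Ω).Partition} (h : cinner (youngChar Ω α) (spechtChar p) ≠ 0) (k : ℕ) :
    colSum (rows p) k ≤ colSum α k := by
  have h1 := cinner_ne_zero_of_common_constituent (isChar_youngChar α)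
    (isChar_signHom_mul_youngChar (colLen (Fintype.card Ω) (rows p))) (spechtChar_mem_irr p) h
    (by rw [cinner_sign_youngChar_spechtChar]; exact one_ne_zero)
  rw [cinner_youngChar_sign] at h1
  have h2 : (separatingPairs Ω α (colLen (Fintype.card Ω) (rows p))).card ≠ 0 := by
    intro h0
    simp [h0] at h1
  obtain ⟨pr, hpr⟩ := Finset.card_ne_zero.1 h2
  exact colSum_le_of_mem_separatingPairs (rows_le p) hpr k

lemma spechtChar_injective :
    Function.Injective (spechtChar : (Fintype.card Ω).Partition → Equiv.Perm Ω → ℂ) := by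
  intro p q h
  by_contra hne
  have h1 := potential_lt_of_ne hne (colSum_le_of_cinner_ne_zero
    (by rw [h, cinner_youngChar_spechtChar]; exact one_ne_zero))
  have h2 := potential_lt_of_ne (Ne.symm hne) (colSum_le_of_cinner_ne_zero
    (by rw [← h, cinner_youngChar_spechtChar]; exact one_ne_zero))
  omega

lemma linearIndependent_spechtChar :
    LinearIndependent ℂ (spechtChar : (Fintype.card Ω).Partition → Equiv.Perm Ω → ℂ) :=
  (linearIndependent_irr (G := Equiv.Perm Ω)).comp
    (fun p => ⟨spechtChar p, mem_irr.1 (spechtChar_mem_irr p)⟩)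
    fun _ _ h => spechtChar_injective (Subtype.ext_iff.1 h)

/-- Class functions on a symmetric group are functions of the cycle type. -/
noncomputable def ofPartitionFun (Ω : Type) [Fintype Ω] :
    ((Fintype.card Ω).Partition → ℂ) →ₗ[ℂ] (Equiv.Perm Ω → ℂ) :=
  LinearMap.funLeft ℂ ℂ Equiv.Perm.partition

lemma mem_range_ofPartitionFun {f : Equiv.Perm Ω → ℂ} (hf : ∀ g x, f (g * x * g⁻¹) = f x) :
    f ∈ LinearMap.range (ofPartitionFun Ω) := by
  refine ⟨fun p => if h : ∃ σ : Equiv.Perm Ω, σ.partition = p then f h.choose else 0, ?_⟩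
  ext σ
  have h : ∃ τ : Equiv.Perm Ω, τ.partition = σ.partition := ⟨σ, rfl⟩
  change (if h : ∃ τ : Equiv.Perm Ω, τ.partition = σ.partition then f h.choose else 0) = f σ
  rw [dif_pos h]
  obtain ⟨g, hg⟩ := isConj_iff.1 (Equiv.Perm.partition_eq_of_isConj.2 h.choose_spec)
  rw [← hf g h.choose, hg]

lemma span_spechtChar :
    Submodule.span ℂ (Set.range (spechtChar : (Fintype.card Ω).Partition → Equiv.Perm Ω → ℂ)) =
      LinearMap.range (ofPartitionFun Ω) := by
  refine Submodule.eq_of_le_of_finrank_le ?_ ?_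
  · rw [Submodule.span_le]
    rintro _ ⟨p, rfl⟩
    exact mem_range_ofPartitionFun
      (isChar_of_isIrrChar (mem_irr.1 (spechtChar_mem_irr p))).conj
  · rw [finrank_span_eq_card linearIndependent_spechtChar]
    refine (LinearMap.finrank_range_le _).trans ?_
    simp

lemma mem_span_spechtChar {f : Equiv.Perm Ω → ℂ} (hf : ∀ g x, f (g * x * g⁻¹) = f x) :
    f ∈ Submodule.span ℂ
      (Set.range (spechtChar : (Fintype.card Ω).Partition → Equiv.Perm Ω → ℂ)) := by
  rw [span_spechtChar]
  exact mem_range_ofPartitionFun hf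

lemma exists_spechtChar_eq {ψ : Equiv.Perm Ω → ℂ} (hψ : ψ ∈ irr (Equiv.Perm Ω)) :
    ∃ p, spechtChar p = ψ := by
  by_contra! h
  have h1 : ∀ f ∈ Submodule.span ℂ
      (Set.range (spechtChar : (Fintype.card Ω).Partition → Equiv.Perm Ω → ℂ)),
      cinner f ψ = 0 := by
    intro f hf
    induction hf using Submodule.span_induction with
    | mem f hf =>
      obtain ⟨p, rfl⟩ := hf
      rw [cinner_irr (mem_irr.1 (spechtChar_mem_irr p)) (mem_irr.1 hψ), if_neg (h p)]
    | zero => simp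
    | add f g _ _ hf hg => simp [hf, hg]
    | smul c f _ hf => simp [hf]
  have h2 := h1 ψ (mem_span_spechtChar (isChar_of_isIrrChar (mem_irr.1 hψ)).conj)
  rw [cinner_irr (mem_irr.1 hψ) (mem_irr.1 hψ), if_pos rfl] at h2
  exact one_ne_zero h2

end SpechtCharacters

section Straightening

variable {Ω : Type} [Fintype Ω] {ι : Type} [Fintype ι]

/-- Replace the entries `a` and `b` of a composition by `j` and `s - j`. -/
noncomputable def redistribute (α : ι → ℕ) (a b : ι) (s j : ℕ) (i : ι) : ℕ :=
  if i = a then j else if i = b then s - j else α i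

lemma sum_eq_add_add_sum {a b : ι} (hab : a ≠ b) (F : ι → ℕ) :
    ∑ i, F i = F a + (F b + ∑ i ∈ (Finset.univ.erase a).erase b, F i) := by
  rw [Finset.add_sum_erase _ _ (by simp [hab.symm]), Finset.add_sum_erase _ _ (Finset.mem_univ a)]

lemma colSum_redistribute {α : ι → ℕ} {a b : ι} (hab : a ≠ b) (s j k : ℕ) :
    colSum (redistribute α a b s j) k + (min (α a) k + min (α b) k) =
      colSum α k + (min j k + min (s - j) k) := by
  rw [colSum, colSum, sum_eq_add_add_sum hab, sum_eq_add_add_sum hab]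
  have h1 : ∑ i ∈ (Finset.univ.erase a).erase b, min (redistribute α a b s j i) k =
      ∑ i ∈ (Finset.univ.erase a).erase b, min (α i) k := by
    refine Finset.sum_congr rfl fun i hi => ?_
    simp only [Finset.mem_erase, Finset.mem_univ, and_true] at hi
    simp [redistribute, hi.1, hi.2]
  rw [h1]
  simp only [redistribute, if_true, if_neg hab.symm]
  omega

lemma potential_redistribute_lt {N : ℕ} {α : ι → ℕ} {a b : ι} (hab : a ≠ b) {m : ℕ} (hm : m ≤ N)
    (ha : α a = m) (hb : α b = m) {j : ℕ} (hj : j ≤ 2 * m) (hjm : j ≠ m) :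
    potential N (redistribute α a b (2 * m) j) < potential N α := by
  refine Finset.sum_lt_sum (fun k _ => ?_) ⟨m, by simp; omega, ?_⟩
  · have := colSum_redistribute (α := α) hab (2 * m) j k
    omega
  · have := colSum_redistribute (α := α) hab (2 * m) j m
    omega

/-- The colourings fixed by `σ` in which only the total number of points of colours `a` and `b`
is prescribed. -/
noncomputable def mergedColorings (σ : Equiv.Perm Ω) (α : ι → ℕ) (a b : ι) (s : ℕ) :
    Finset (Ω → ι) :=
  Finset.univ.filter fun f => f ∘ σ = f ∧
    (∀ i, i ≠ a → i ≠ b → (Finset.univ.filter fun x => f x = i).card = α i) ∧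
    (Finset.univ.filter fun x => f x = a ∨ f x = b).card = s

lemma mem_mergedColorings {σ : Equiv.Perm Ω} {α : ι → ℕ} {a b : ι} {s : ℕ} {f : Ω → ι} :
    f ∈ mergedColorings σ α a b s ↔ f ∘ σ = f ∧
      (∀ i, i ≠ a → i ≠ b → (Finset.univ.filter fun x => f x = i).card = α i) ∧
      (Finset.univ.filter fun x => f x = a ∨ f x = b).card = s := by
  simp [mergedColorings]

omit [Fintype ι] in
lemma card_filter_or {a b : ι} (hab : a ≠ b) (f : Ω → ι) :
    (Finset.univ.filter fun x => f x = a ∨ f x = b).card =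
      (Finset.univ.filter fun x => f x = a).card + (Finset.univ.filter fun x => f x = b).card := by
  rw [Finset.filter_or, Finset.card_union_of_disjoint]
  rw [Finset.disjoint_filter]
  rintro x - h1 h2
  exact hab (h1.symm.trans h2)

lemma filter_mergedColorings {σ : Equiv.Perm Ω} {α : ι → ℕ} {a b : ι} (hab : a ≠ b) {s j : ℕ}
    (hj : j ≤ s) :
    (mergedColorings σ α a b s).filter (fun f => (Finset.univ.filter fun x => f x = a).card = j) =
      (colorings Ω (redistribute α a b s j)).filter fun f => f ∘ σ = f := by
  ext f
  rw [Finset.mem_filter, Finset.mem_filter, mem_mergedColorings, mem_colorings,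
    card_filter_or hab]
  constructor
  · rintro ⟨⟨h1, h2, h3⟩, h4⟩
    refine ⟨fun i => ?_, h1⟩
    rw [redistribute]
    split_ifs with hia hib
    · rw [hia, h4]
    · rw [hib]
      omega
    · exact h2 i hia hib
  · rintro ⟨h1, h2⟩
    have ha := h1 a
    have hb := h1 b
    simp only [redistribute, if_true, if_neg hab.symm] at ha hb
    refine ⟨⟨h2, fun i hia hib => ?_, by omega⟩, ha⟩
    rw [h1 i, redistribute, if_neg hia, if_neg hib]

lemma sum_youngChar_redistribute (σ : Equiv.Perm Ω) (α : ι → ℕ) {a b : ι} (hab : a ≠ b) (s : ℕ) :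
    ∑ j ∈ Finset.range (s + 1), (-1 : ℂ) ^ j * youngChar Ω (redistribute α a b s j) σ =
      ∑ f ∈ mergedColorings σ α a b s, (-1) ^ (Finset.univ.filter fun x => f x = a).card := by
  rw [← Finset.sum_fiberwise_of_maps_to (s := mergedColorings σ α a b s)
    (t := Finset.range (s + 1)) (g := fun f => (Finset.univ.filter fun x => f x = a).card)]
  · refine Finset.sum_congr rfl fun j hj => ?_
    rw [Finset.sum_congr rfl (g := fun _ => (-1 : ℂ) ^ j), Finset.sum_const,
      filter_mergedColorings hab (by simpa [Nat.lt_succ_iff] using hj), youngChar, nsmul_eq_mul,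
      mul_comm]
    intro f hf
    rw [(Finset.mem_filter.1 hf).2]
  · intro f hf
    rw [mem_mergedColorings, card_filter_or hab] at hf
    rw [Finset.mem_range]
    omega

/-- Interchange the colours `a` and `b` on a subset. -/
noncomputable def swapOn (C : Finset Ω) (a b : ι) (f : Ω → ι) (x : Ω) : ι :=
  if x ∈ C then Equiv.swap a b (f x) else f x

omit [Fintype ι] [Fintype Ω] in
lemma swapOn_swapOn (C : Finset Ω) (a b : ι) (f : Ω → ι) :
    swapOn C a b (swapOn C a b f) = f := by
  ext x
  by_cases hx : x ∈ C <;> simp [swapOn, hx]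

omit [Fintype ι] [Fintype Ω] in
lemma swapOn_eq_or (C : Finset Ω) (a b : ι) (f : Ω → ι) (x : Ω) :
    (swapOn C a b f x = a ∨ swapOn C a b f x = b) ↔ (f x = a ∨ f x = b) := by
  by_cases hx : x ∈ C
  · simp only [swapOn, hx, if_true]
    rw [Equiv.swap_apply_eq_iff, Equiv.swap_apply_eq_iff, Equiv.swap_apply_left,
      Equiv.swap_apply_right, or_comm]
  · simp [swapOn, hx]

omit [Fintype ι] [Fintype Ω] in
lemma swapOn_eq_iff_of_ne (C : Finset Ω) {a b i : ι} (hia : i ≠ a) (hib : i ≠ b) (f : Ω → ι)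
    (x : Ω) : swapOn C a b f x = i ↔ f x = i := by
  by_cases hx : x ∈ C
  · simp only [swapOn, hx, if_true]
    rw [Equiv.swap_apply_eq_iff, Equiv.swap_apply_of_ne_of_ne hia hib]
  · simp [swapOn, hx]

lemma swapOn_mem_mergedColorings {σ : Equiv.Perm Ω} {α : ι → ℕ} {a b : ι} {s : ℕ} {f : Ω → ι}
    (hf : f ∈ mergedColorings σ α a b s) {C : Finset Ω} (hC : ∀ x, σ x ∈ C ↔ x ∈ C) :
    swapOn C a b f ∈ mergedColorings σ α a b s := by
  rw [mem_mergedColorings] at hf ⊢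
  obtain ⟨h1, h2, h3⟩ := hf
  refine ⟨?_, fun i hia hib => ?_, ?_⟩
  · ext x
    have h4 : f (σ x) = f x := congrFun h1 x
    simp [swapOn, hC, h4]
  · simp only [swapOn_eq_iff_of_ne C hia hib, h2 i hia hib]
  · simp only [swapOn_eq_or, h3]

omit [Fintype ι] in
lemma neg_one_pow_card_swapOn {a b : ι} (hab : a ≠ b) {f : Ω → ι} {C : Finset Ω}
    (hodd : Odd C.card) (hC : ∀ x ∈ C, f x = a ∨ f x = b) :
    (-1 : ℂ) ^ (Finset.univ.filter fun x => swapOn C a b f x = a).card =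
      -(-1 : ℂ) ^ (Finset.univ.filter fun x => f x = a).card := by
  have h1 : ∀ g : Ω → ι, (-1 : ℂ) ^ (Finset.univ.filter fun x => g x = a).card =
      ∏ x, if g x = a then -1 else 1 := by
    intro g
    rw [← Finset.prod_filter, Finset.prod_const]
  have h2 : ∀ x, (if swapOn C a b f x = a then (-1 : ℂ) else 1) =
      (if x ∈ C then -1 else 1) * if f x = a then -1 else 1 := by
    intro x
    by_cases hx : x ∈ C
    · rcases hC x hx with h | h <;> simp [swapOn, hx, h, hab.symm]
    · simp [swapOn, hx]
  rw [h1, h1, Finset.prod_congr rfl fun x _ => h2 x, Finset.prod_mul_distrib]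
  have h3 : (∏ x, if x ∈ C then (-1 : ℂ) else 1) = -1 := by
    rw [← Finset.prod_filter, Finset.prod_const, Finset.filter_mem_eq_inter, Finset.univ_inter,
      hodd.neg_one_pow]
  rw [h3, neg_one_mul]

/-- The cycle of a permutation through a point. -/
noncomputable def cycleThrough (σ : Equiv.Perm Ω) (x : Ω) : Finset Ω :=
  (MulAction.orbit (Subgroup.zpowers σ) x).toFinset

lemma mem_cycleThrough {σ : Equiv.Perm Ω} {x y : Ω} :
    y ∈ cycleThrough σ x ↔ ∃ k : ℤ, (σ ^ k) x = y := by
  rw [cycleThrough, Set.mem_toFinset, MulAction.mem_orbit_iff]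
  constructor
  · rintro ⟨⟨_, k, rfl⟩, h⟩
    exact ⟨k, h⟩
  · rintro ⟨k, h⟩
    exact ⟨⟨σ ^ k, k, rfl⟩, h⟩

lemma apply_mem_cycleThrough {σ : Equiv.Perm Ω} {x : Ω} (y : Ω) :
    σ y ∈ cycleThrough σ x ↔ y ∈ cycleThrough σ x := by
  rw [mem_cycleThrough, mem_cycleThrough]
  constructor
  · rintro ⟨k, h⟩
    refine ⟨-1 + k, ?_⟩
    rw [zpow_add, Equiv.Perm.mul_apply, h]
    simp
  · rintro ⟨k, rfl⟩
    exact ⟨1 + k, by rw [zpow_add, Equiv.Perm.mul_apply, zpow_one]⟩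

lemma odd_card_cycleThrough {σ : Equiv.Perm Ω} (hσ : Odd (orderOf σ)) (x : Ω) :
    Odd (cycleThrough σ x).card := by
  refine hσ.of_dvd_nat ?_
  rw [← Fintype.card_zpowers, cycleThrough, Set.toFinset_card,
    ← MulAction.card_orbit_mul_card_stabilizer_eq_card_group (Subgroup.zpowers σ) x]
  exact Dvd.intro _ rfl

omit [Fintype ι] in
lemma apply_eq_of_mem_cycleThrough {σ : Equiv.Perm Ω} {f : Ω → ι} (hf : f ∘ σ = f) {x y : Ω}
    (hy : y ∈ cycleThrough σ x) : f y = f x := by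
  have h1 : ∀ z, f (σ z) = f z := congrFun hf
  obtain ⟨k, rfl⟩ := mem_cycleThrough.1 hy
  induction k using Int.induction_on generalizing x with
  | zero => simp
  | succ k ih =>
    rw [zpow_add, zpow_one, Equiv.Perm.mul_apply, ih (mem_cycleThrough.2 ⟨_, rfl⟩), h1]
  | pred k ih =>
    rw [zpow_sub, zpow_one, Equiv.Perm.mul_apply, ih (mem_cycleThrough.2 ⟨_, rfl⟩),
      ← h1 (σ⁻¹ x)]
    simp

theorem sum_youngChar_redistribute_eq_zero {σ : Equiv.Perm Ω} (hσ : Odd (orderOf σ)) (α : ι → ℕ)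
    {a b : ι} (hab : a ≠ b) {s : ℕ} (hs : 0 < s) :
    ∑ j ∈ Finset.range (s + 1), (-1 : ℂ) ^ j * youngChar Ω (redistribute α a b s j) σ = 0 := by
  rw [sum_youngChar_redistribute σ α hab]
  obtain ⟨C, hC⟩ : ∃ C : Finset Ω → Finset Ω, ∀ A, A.Nonempty →
      ∃ x ∈ A, C A = cycleThrough σ x := by
    refine ⟨fun A => if h : A.Nonempty then cycleThrough σ h.choose else ∅, fun A hA => ?_⟩
    exact ⟨hA.choose, hA.choose_spec, dif_pos hA⟩
  set c : (Ω → ι) → Finset Ω := fun f => C (Finset.univ.filter fun x => f x = a ∨ f x = b) with hc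
  have hcyc : ∀ f ∈ mergedColorings σ α a b s,
      ∃ x, (f x = a ∨ f x = b) ∧ c f = cycleThrough σ x := by
    intro f hf
    obtain ⟨x, hx, hCx⟩ := hC (Finset.univ.filter fun x => f x = a ∨ f x = b) (by
      rw [← Finset.card_pos, (mem_mergedColorings.1 hf).2.2]
      exact hs)
    exact ⟨x, (Finset.mem_filter.1 hx).2, hCx⟩
  have hneg : ∀ f ∈ mergedColorings σ α a b s,
      (-1 : ℂ) ^ (Finset.univ.filter fun x => swapOn (c f) a b f x = a).card =
      -(-1 : ℂ) ^ (Finset.univ.filter fun x => f x = a).card := by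
    intro f hf
    obtain ⟨x, hx, hcx⟩ := hcyc f hf
    rw [hcx]
    refine neg_one_pow_card_swapOn hab (odd_card_cycleThrough hσ x) fun y hy => ?_
    rwa [apply_eq_of_mem_cycleThrough (mem_mergedColorings.1 hf).1 hy]
  refine Finset.sum_involution (fun f _ => swapOn (c f) a b f) ?_ ?_ ?_ ?_
  · intro f hf
    rw [hneg f hf, add_neg_cancel]
  · intro f hf h0 heq
    have := hneg f hf
    rw [heq] at this
    exact h0 (self_eq_neg.1 this)
  · intro f hf
    obtain ⟨x, -, hcx⟩ := hcyc f hf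
    exact swapOn_mem_mergedColorings hf fun y => by rw [hcx, apply_mem_cycleThrough]
  · intro f hf
    have h1 : c (swapOn (c f) a b f) = c f := by
      simp only [hc, swapOn_eq_or]
    simp only [h1, swapOn_swapOn]

end Straightening

section SymmetricGroup

variable {Ω : Type} [Fintype Ω]

lemma twoReg_add {G : Type*} [Monoid G] (f g : G → ℂ) : twoReg (f + g) = twoReg f + twoReg g := by
  ext x
  by_cases h : Odd (orderOf x) <;> simp [twoReg, h]

lemma twoReg_smul {G : Type*} [Monoid G] (c : ℂ) (f : G → ℂ) :
    twoReg (c • f) = c • twoReg f := by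
  ext x
  by_cases h : Odd (orderOf x) <;> simp [twoReg, h]

/-- Restriction to elements of odd order as a linear map. -/
noncomputable def twoRegLin (G : Type*) [Monoid G] : (G → ℂ) →ₗ[ℂ] (G → ℂ) where
  toFun := twoReg
  map_add' := twoReg_add
  map_smul' := twoReg_smul

lemma twoRegLin_apply {G : Type*} [Monoid G] (f : G → ℂ) : twoRegLin G f = twoReg f := rfl

/-- The irreducible characters labelled by the partitions into distinct parts. -/
noncomputable def strictSpecht (Ω : Type) [Fintype Ω] : Finset (Equiv.Perm Ω → ℂ) :=
  (Nat.Partition.distincts (Fintype.card Ω)).image spechtChar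

lemma youngChar_eq_sum {ι : Type} [Fintype ι] (α : ι → ℕ) :
    ∃ m : (Equiv.Perm Ω → ℂ) → ℕ,
      youngChar Ω α = ∑ ψ ∈ irr (Equiv.Perm Ω), (m ψ : ℂ) • ψ ∧
      (∀ p, m (spechtChar p) ≠ 0 → ∀ k, colSum (rows p) k ≤ colSum α k) := by
  obtain ⟨m, hm⟩ := (isChar_youngChar (Ω := Ω) α).exists_mult
  refine ⟨m, hm, fun p hp => colSum_le_of_cinner_ne_zero ?_⟩
  rw [hm, cinner_sum_irr _ (spechtChar_mem_irr p)]
  exact_mod_cast hp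

lemma twoReg_youngChar_mem {M : Submodule ℤ (Equiv.Perm Ω → ℂ)} {ι : Type} [Fintype ι]
    {α : ι → ℕ} (h : ∀ p : (Fintype.card Ω).Partition,
      potential (Fintype.card Ω) (rows p) ≤ potential (Fintype.card Ω) α →
        twoReg (spechtChar p) ∈ M) : twoReg (youngChar Ω α) ∈ M := by
  obtain ⟨m, hm, hle⟩ := youngChar_eq_sum (Ω := Ω) α
  rw [hm, ← twoRegLin_apply, map_sum]
  refine Submodule.sum_mem _ fun ψ hψ => ?_
  obtain ⟨p, rfl⟩ := exists_spechtChar_eq hψ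
  rw [map_smul, Nat.cast_smul_eq_nsmul]
  by_cases h0 : m (spechtChar p) = 0
  · rw [h0, zero_smul]
    exact Submodule.zero_mem _
  · exact nsmul_mem (h p (Finset.sum_le_sum fun k _ => hle p h0 k)) _

lemma twoReg_youngChar_sub_mem {M : Submodule ℤ (Equiv.Perm Ω → ℂ)}
    (p : (Fintype.card Ω).Partition) (h : ∀ q : (Fintype.card Ω).Partition,
      potential (Fintype.card Ω) (rows q) < potential (Fintype.card Ω) (rows p) →
        twoReg (spechtChar q) ∈ M) :
    twoReg (youngChar Ω (rows p)) - twoReg (spechtChar p) ∈ M := by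
  obtain ⟨m, hm, hle⟩ := youngChar_eq_sum (Ω := Ω) (rows p)
  have h1 : (m (spechtChar p) : ℂ) = 1 := by
    rw [← cinner_youngChar_spechtChar p, hm, cinner_sum_irr _ (spechtChar_mem_irr p)]
  rw [hm, ← Finset.add_sum_erase _ _ (spechtChar_mem_irr p), h1, one_smul, twoReg_add,
    add_sub_cancel_left, ← twoRegLin_apply, map_sum]
  refine Submodule.sum_mem _ fun ψ hψ => ?_
  rw [Finset.mem_erase] at hψ
  obtain ⟨q, rfl⟩ := exists_spechtChar_eq hψ.2
  rw [map_smul, Nat.cast_smul_eq_nsmul]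
  by_cases h0 : m (spechtChar q) = 0
  · rw [h0, zero_smul]
    exact Submodule.zero_mem _
  · refine nsmul_mem (h q (potential_lt_of_ne ?_ (hle q h0))) _
    rintro rfl
    exact hψ.1 rfl

lemma sum_twoReg_youngChar_redistribute {ι : Type} [Fintype ι] (α : ι → ℕ) {a b : ι}
    (hab : a ≠ b) {s : ℕ} (hs : 0 < s) :
    ∑ j ∈ Finset.range (s + 1),
      (-1 : ℤ) ^ j • twoReg (youngChar Ω (redistribute α a b s j)) = 0 := by
  ext σ
  rw [Finset.sum_apply, Pi.zero_apply]
  by_cases hσ : Odd (orderOf σ)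
  · rw [← sum_youngChar_redistribute_eq_zero hσ α hab hs]
    refine Finset.sum_congr rfl fun j _ => ?_
    simp [twoReg, hσ]
  · refine Finset.sum_eq_zero fun j _ => ?_
    simp [twoReg, hσ]

lemma twoReg_youngChar_mem_of_redistribute {M : Submodule ℤ (Equiv.Perm Ω → ℂ)} {ι : Type}
    [Fintype ι] {α : ι → ℕ} {a b : ι} (hab : a ≠ b) {m : ℕ} (hm : 0 < m) (ha : α a = m)
    (hb : α b = m) (h : ∀ j ≤ 2 * m, j ≠ m →
      twoReg (youngChar Ω (redistribute α a b (2 * m) j)) ∈ M) :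
    twoReg (youngChar Ω α) ∈ M := by
  have hα : redistribute α a b (2 * m) m = α := by
    ext i
    rw [redistribute]
    split_ifs with hia hib
    · rw [hia, ha]
    · rw [hib, hb]
      omega
    · rfl
  have hsum := sum_twoReg_youngChar_redistribute (Ω := Ω) α hab (s := 2 * m) (by omega)
  have hmem : m ∈ Finset.range (2 * m + 1) := by
    rw [Finset.mem_range]
    omega
  rw [← Finset.add_sum_erase _ _ hmem, hα] at hsum
  have h1 : (-1 : ℤ) ^ m • twoReg (youngChar Ω α) ∈ M := by
    rw [eq_neg_of_add_eq_zero_left hsum]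
    refine Submodule.neg_mem _ (Submodule.sum_mem _ fun j hj => Submodule.smul_mem _ _ ?_)
    rw [Finset.mem_erase, Finset.mem_range] at hj
    exact h j (by omega) hj.1
  have h2 := Submodule.smul_mem _ ((-1 : ℤ) ^ m) h1
  rwa [smul_smul, ← mul_pow, neg_one_mul, neg_neg, one_pow, one_smul] at h2

lemma twoReg_spechtChar_mem_span (p : (Fintype.card Ω).Partition) :
    twoReg (spechtChar p) ∈ Submodule.span ℤ (twoReg '' (strictSpecht Ω : Set _)) := by
  induction hM : potential (Fintype.card Ω) (rows p) using Nat.strong_induction_on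
    generalizing p with
  | _ M ih =>
  subst hM
  by_cases hp : p ∈ Nat.Partition.distincts (Fintype.card Ω)
  · exact Submodule.subset_span ⟨_, Finset.mem_coe.2 (Finset.mem_image_of_mem _ hp), rfl⟩
  · have hp' : ¬p.parts.Nodup := by simpa [Nat.Partition.distincts] using hp
    rw [Multiset.nodup_iff_count_le_one] at hp'
    push Not at hp'
    obtain ⟨m, hm⟩ := hp'
    have hmem : m ∈ p.parts := Multiset.count_pos.1 (by omega)
    have hpos : 0 < m := p.parts_pos hmem
    let a : p.parts.ToType := ⟨m, ⟨0, by omega⟩⟩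
    let b : p.parts.ToType := ⟨m, ⟨1, hm⟩⟩
    have hab : a ≠ b := by
      intro h
      simpa using congrArg Fin.val (eq_of_heq (Sigma.mk.inj h).2)
    have hra : rows p a = m := rfl
    have hrb : rows p b = m := rfl
    have hyoung : twoReg (youngChar Ω (rows p)) ∈
        Submodule.span ℤ (twoReg '' (strictSpecht Ω : Set (Equiv.Perm Ω → ℂ))) :=
      twoReg_youngChar_mem_of_redistribute hab hpos hra hrb fun j hj hjm =>
        twoReg_youngChar_mem fun q hq => ih _ (hq.trans_lt
          (potential_redistribute_lt hab (p.le_of_mem_parts hmem) hra hrb hj hjm)) q rfl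
    have h3 := twoReg_youngChar_sub_mem p
      (M := Submodule.span ℤ (twoReg '' (strictSpecht Ω : Set (Equiv.Perm Ω → ℂ))))
      fun q hq => ih _ hq q rfl
    have h4 := Submodule.sub_mem _ hyoung h3
    rwa [sub_sub_cancel] at h4

lemma odd_multiset_lcm {s : Multiset ℕ} (h : ∀ a ∈ s, Odd a) : Odd s.lcm := by
  induction s using Multiset.induction_on with
  | empty => simp
  | cons a s ih =>
    rw [Multiset.lcm_cons]
    refine Odd.of_dvd_nat ((h a (by simp)).mul (ih fun b hb => h b (by simp [hb]))) ?_
    exact lcm_dvd_mul a s.lcm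

lemma exists_partition_eq (p : (Fintype.card Ω).Partition) :
    ∃ σ : Equiv.Perm Ω, σ.partition = p := by
  have hsplit : p.parts.filter (2 ≤ ·) + p.parts.filter (fun a => ¬2 ≤ a) = p.parts :=
    Multiset.filter_add_not _ _
  have hones : p.parts.filter (fun a => ¬2 ≤ a) =
      Multiset.replicate (Multiset.card (p.parts.filter fun a => ¬2 ≤ a)) 1 := by
    rw [Multiset.eq_replicate]
    refine ⟨rfl, fun a ha => ?_⟩
    have h1 := p.parts_pos (Multiset.mem_filter.1 ha).1
    have h2 := (Multiset.mem_filter.1 ha).2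
    omega
  have hsum := congrArg Multiset.sum hsplit
  rw [Multiset.sum_add, p.parts_sum, hones, Multiset.sum_replicate, smul_eq_mul, mul_one] at hsum
  obtain ⟨σ, hσ⟩ := (Equiv.Perm.exists_with_cycleType_iff Ω
    (m := p.parts.filter (2 ≤ ·))).2 ⟨by omega, fun a ha => (Multiset.mem_filter.1 ha).2⟩
  refine ⟨σ, Nat.Partition.ext ?_⟩
  rw [Equiv.Perm.parts_partition, hσ, ← Equiv.Perm.sum_cycleType, hσ]
  conv_rhs => rw [← hsplit, hones]
  congr 2
  omega

lemma odd_orderOf_of_partition_mem_odds {σ : Equiv.Perm Ω}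
    (h : σ.partition ∈ Nat.Partition.odds (Fintype.card Ω)) : Odd (orderOf σ) := by
  rw [← Equiv.Perm.lcm_cycleType]
  refine odd_multiset_lcm fun a ha => ?_
  simp only [Nat.Partition.odds, Nat.Partition.restricted, Finset.mem_filter, Finset.mem_univ,
    true_and] at h
  rw [← Nat.not_even_iff_odd]
  refine h a ?_
  rw [Equiv.Perm.parts_partition]
  exact Multiset.mem_add.2 (Or.inl ha)

/-- Evaluation of a class function at the conjugacy classes of odd cycle type. -/
noncomputable def evalOdds (Ω : Type) [Fintype Ω] :
    (Equiv.Perm Ω → ℂ) →ₗ[ℂ] (Nat.Partition.odds (Fintype.card Ω) → ℂ) :=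
  LinearMap.funLeft ℂ ℂ fun p => (exists_partition_eq p.1).choose

lemma evalOdds_apply (f : Equiv.Perm Ω → ℂ) (p : Nat.Partition.odds (Fintype.card Ω)) :
    evalOdds Ω f p = f (exists_partition_eq p.1).choose := rfl

lemma evalOdds_twoReg (f : Equiv.Perm Ω → ℂ) : evalOdds Ω (twoReg f) = evalOdds Ω f := by
  ext p
  rw [evalOdds_apply, evalOdds_apply, twoReg, if_pos]
  refine odd_orderOf_of_partition_mem_odds ?_
  rw [(exists_partition_eq p.1).choose_spec]
  exact p.2

lemma span_evalOdds_strictSpecht :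
    ⊤ ≤ Submodule.span ℂ (Set.range fun p : Nat.Partition.distincts (Fintype.card Ω) =>
      evalOdds Ω (twoReg (spechtChar p.1))) := by
  intro F _
  set W := Submodule.span ℂ (Set.range fun p : Nat.Partition.distincts (Fintype.card Ω) =>
    evalOdds Ω (twoReg (spechtChar p.1))) with hW
  have hspecht : ∀ q : (Fintype.card Ω).Partition, evalOdds Ω (spechtChar q) ∈ W := by
    intro q
    rw [← evalOdds_twoReg]
    have h1 : ∀ g ∈ Submodule.span ℤ (twoReg '' (strictSpecht Ω : Set (Equiv.Perm Ω → ℂ))),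
        evalOdds Ω g ∈ W := by
      intro g hg
      induction hg using Submodule.span_induction with
      | mem g hg =>
        obtain ⟨ψ, hψ, rfl⟩ := hg
        obtain ⟨p, hp, rfl⟩ := Finset.mem_image.1 (Finset.mem_coe.1 hψ)
        exact Submodule.subset_span ⟨⟨p, hp⟩, rfl⟩
      | zero => simp
      | add g h _ _ hg hh => rw [map_add]; exact Submodule.add_mem _ hg hh
      | smul c g _ hg => rw [map_zsmul]; exact zsmul_mem hg c
    exact h1 _ (twoReg_spechtChar_mem_span q)
  let f : Equiv.Perm Ω → ℂ := ofPartitionFun Ω fun p =>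
    if h : p ∈ Nat.Partition.odds (Fintype.card Ω) then F ⟨p, h⟩ else 0
  have hf : f ∈ Submodule.span ℂ
      (Set.range (spechtChar : (Fintype.card Ω).Partition → Equiv.Perm Ω → ℂ)) := by
    rw [span_spechtChar]
    exact ⟨_, rfl⟩
  have hfF : evalOdds Ω f = F := by
    ext p
    rw [evalOdds_apply]
    change (if h : (exists_partition_eq p.1).choose.partition ∈ _ then F ⟨_, h⟩ else 0) = F p
    have h1 := (exists_partition_eq p.1).choose_spec
    have h2 : (exists_partition_eq p.1).choose.partition ∈
        Nat.Partition.odds (Fintype.card Ω) := h1.symm ▸ p.2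
    rw [dif_pos h2]
    exact congrArg F (Subtype.ext h1)
  rw [← hfF]
  have h2 : Submodule.span ℂ
      (Set.range (spechtChar : (Fintype.card Ω).Partition → Equiv.Perm Ω → ℂ)) ≤
      W.comap (evalOdds Ω) := by
    rw [Submodule.span_le]
    rintro _ ⟨q, rfl⟩
    exact hspecht q
  exact h2 hf

lemma linearIndependent_evalOdds_strictSpecht :
    LinearIndependent ℂ fun p : Nat.Partition.distincts (Fintype.card Ω) =>
      evalOdds Ω (twoReg (spechtChar p.1)) := by
  refine linearIndependent_of_top_le_span_of_card_eq_finrank span_evalOdds_strictSpecht ?_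
  rw [Module.finrank_fintype_fun_eq_card, Fintype.card_coe, Fintype.card_coe,
    Nat.Partition.card_odds_eq_card_distincts]

lemma eq_zero_of_sum_smul_twoReg_eq_zero {c : (Equiv.Perm Ω → ℂ) → ℤ}
    (hc : ∑ ψ ∈ strictSpecht Ω, c ψ • twoReg ψ = 0) : ∀ ψ ∈ strictSpecht Ω, c ψ = 0 := by
  rw [strictSpecht, Finset.sum_image fun p _ q _ h => spechtChar_injective h,
    ← Finset.sum_coe_sort] at hc
  have h1 := congrArg (evalOdds Ω) hc
  rw [map_sum, map_zero] at h1
  have h2 := Fintype.linearIndependent_iff.1 linearIndependent_evalOdds_strictSpecht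
    (fun p => (c (spechtChar p.1) : ℂ)) (by
      rw [← h1]
      refine Finset.sum_congr rfl fun p _ => ?_
      rw [map_zsmul, Int.cast_smul_eq_zsmul])
  intro ψ hψ
  obtain ⟨p, hp, rfl⟩ := Finset.mem_image.1 hψ
  exact_mod_cast h2 ⟨p, hp⟩

end SymmetricGroup

lemma isTwoBasicSet_of_odd_orderOf {G : Type} [Group G] [Fintype G]
    (h : ∀ x : G, Odd (orderOf x)) : IsTwoBasicSet G {f | IsIrrChar G f} := by
  have h1 : ∀ f : G → ℂ, twoReg f = f := fun f => funext fun x => if_pos (h x)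
  refine ⟨subset_rfl, ?_, rfl⟩
  simp only [h1]
  exact (linearIndependent_irr (G := G)).restrict_scalars (R := ℤ) fun a b hab => by
    simpa using hab

lemma exists_odd_perm_commuting {Ω : Type} [Fintype Ω] [DecidableEq Ω] (x : Equiv.Perm Ω)
    (hx : ¬Odd (orderOf x)) : ∃ σ ∉ alternatingGroup Ω, σ * x * σ⁻¹ = x := by
  by_contra! h
  refine hx ?_
  rw [← Equiv.Perm.lcm_cycleType]
  refine odd_multiset_lcm fun a ha =>
    Equiv.Perm.OnCycleFactors.odd_of_centralizer_le_alternatingGroup (fun σ hσ => ?_) a ha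
  by_contra hA
  refine h σ hA ?_
  rw [Subgroup.mem_centralizer_singleton_iff] at hσ
  rw [mul_inv_eq_iff_eq_mul, hσ]

theorem exists_isTwoBasicSet_alternatingGroup (Ω : Type) [Fintype Ω] [inst : DecidableEq Ω]
    (hΩ : 1 < Fintype.card Ω) :
    ∃ B : Set (alternatingGroup Ω → ℂ), IsTwoBasicSet (alternatingGroup Ω) B := by
  obtain rfl : inst = fun a b => Classical.propDecidable (a = b) := Subsingleton.elim _ _
  obtain ⟨a, b, hab⟩ := Fintype.one_lt_card_iff.1 hΩ
  refine exists_isTwoBasicSet_of_index_two (ε := signHom Ω) (τ := Equiv.swap a b)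
    (T := strictSpecht Ω) ?_ ?_ ?_ ?_ ?_ ?_ ?_
  · intro x
    rw [signHom_apply]
    simp only [Equiv.Perm.mem_alternatingGroup]
    rcases Int.units_eq_one_or (Equiv.Perm.sign x) with h | h
    · simp [h]
    · rw [h, if_neg (by decide)]
      simp
  · intro f hf
    refine Submodule.span_mono ?_ (mem_span_spechtChar hf)
    rintro _ ⟨p, rfl⟩
    exact mem_irr.1 (spechtChar_mem_irr p)
  · rw [Equiv.Perm.mem_alternatingGroup, Equiv.Perm.sign_swap hab]
    decide
  · exact fun x _ hx => exists_odd_perm_commuting x hx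
  · intro ψ hψ
    obtain ⟨p, -, rfl⟩ := Finset.mem_image.1 hψ
    exact spechtChar_mem_irr p
  · exact fun c hc => eq_zero_of_sum_smul_twoReg_eq_zero hc
  · intro ψ hψ
    obtain ⟨p, rfl⟩ := exists_spechtChar_eq hψ
    exact twoReg_spechtChar_mem_span p

end TwoBasic

/-- For every positive integer n, the alternating group A_n possesses a
2-basic set. -/
theorem An_has_twoBasicSet (n : ℕ) (hn : 0 < n) :
    ∃ B : Set (alternatingGroup (Fin n) → ℂ),
      IsTwoBasicSet (alternatingGroup (Fin n)) B := by
  rcases Nat.lt_or_ge 1 n with h1 | h1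
  · exact TwoBasic.exists_isTwoBasicSet_alternatingGroup (Fin n) (by rwa [Fintype.card_fin])
  · obtain rfl : n = 1 := by omega
    refine ⟨_, TwoBasic.isTwoBasicSet_of_odd_orderOf fun x => ?_⟩
    rw [Subsingleton.elim x 1, orderOf_one]
    exact odd_one
end

section
/- For every positive integer w, the virtual characters γ_χ := Ind_{S_w × S_w}^{S_{2w}}(χ ⊠ χ), as χ ranges over the irreducible complex characters of S_w, are ℤ-linearly independent elements of the group of virtual characters of S_{2w}. -/
open scoped Classical

/-- Induction of a class function `u` on `H` along a (typically injective) group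
homomorphism `φ : H →* G`; for the inclusion of a subgroup this is the usual induced class
function `Ind_H^G u (g) = |H|⁻¹ ∑_{x ∈ G, x⁻¹gx ∈ H} u (x⁻¹gx)`. -/
noncomputable def indHom {H G : Type*} [Group H] [Fintype H] [Group G] [Fintype G]
    (φ : H →* G) (u : H → ℂ) : G → ℂ :=
  fun g => (Nat.card H : ℂ)⁻¹ *
    ∑ x : G, ∑ h : H, if φ h = x⁻¹ * g * x then u h else 0

section Characters

variable {G : Type} [Group G] [Fintype G]

/-- The character pairing `(f, g) ↦ |G|⁻¹ ∑ₓ f x * g x⁻¹`, linear in the first argument. -/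
noncomputable def charPairing (g : G → ℂ) : (G → ℂ) →ₗ[ℂ] ℂ where
  toFun f := (Nat.card G : ℂ)⁻¹ * ∑ x : G, f x * g x⁻¹
  map_add' f f' := by simp [add_mul, Finset.sum_add_distrib, mul_add]
  map_smul' c f := by simp [mul_assoc, Finset.mul_sum, mul_left_comm]

theorem charPairing_apply (f g : G → ℂ) :
    charPairing g f = (Nat.card G : ℂ)⁻¹ * ∑ x : G, f x * g x⁻¹ := rfl

theorem IsIrrChar.charPairing_eq {f g : G → ℂ} (hf : IsIrrChar G f) (hg : IsIrrChar G g) :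
    charPairing g f = if f = g then 1 else 0 := by
  obtain ⟨V, hV, rfl⟩ := hf
  obtain ⟨W, hW, rfl⟩ := hg
  have : Invertible (Nat.card G : ℂ) := invertibleOfNonzero (by simp [Nat.card_eq_fintype_card])
  rw [charPairing_apply, FDRep.char_orthonormal]
  by_cases h : Nonempty (V ≅ W)
  · rw [if_pos h, if_pos (FDRep.char_iso h.some)]
  · rw [if_neg h, if_neg]
    intro hc
    have h1 := FDRep.char_orthonormal V V
    have h2 := FDRep.char_orthonormal V W
    rw [← hc, h1, if_pos ⟨CategoryTheory.Iso.refl V⟩, if_neg h] at h2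
    exact one_ne_zero h2

omit [Fintype G] in
theorem IsIrrChar.conj {f : G → ℂ} (hf : IsIrrChar G f) (g h : G) :
    f (h * g * h⁻¹) = f g := by
  obtain ⟨V, -, rfl⟩ := hf
  exact V.char_conj g h

theorem linearIndependent_irrChar :
    LinearIndependent ℂ (fun χ : {f : G → ℂ // IsIrrChar G f} => χ.1) := by
  rw [linearIndependent_iff']
  intro s c hc i hi
  have := congrArg (charPairing i.1) hc
  simp only [map_sum, map_smul, map_zero] at this
  rw [Finset.sum_eq_single i] at this
  · simpa [i.2.charPairing_eq i.2] using this
  · intro j _ hj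
    rw [j.2.charPairing_eq i.2, if_neg (fun h => hj (Subtype.ext h)), smul_zero]
  · exact fun h => absurd hi h

theorem eq_sum_charPairing [Fintype {f : G → ℂ // IsIrrChar G f}] {f : G → ℂ}
    (hf : f ∈ Submodule.span ℂ (Set.range fun χ : {f : G → ℂ // IsIrrChar G f} => χ.1)) :
    f = ∑ χ : {f : G → ℂ // IsIrrChar G f}, charPairing χ.1 f • χ.1 := by
  obtain ⟨c, rfl⟩ := (Submodule.mem_span_range_iff_exists_fun ℂ).1 hf
  refine Finset.sum_congr rfl fun i _ => ?_
  congr 1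
  rw [map_sum, Finset.sum_eq_single i]
  · simp [i.2.charPairing_eq i.2]
  · intro j _ hj
    rw [map_smul, j.2.charPairing_eq i.2, if_neg (fun h => hj (Subtype.ext h)), smul_zero]
  · simp

theorem Representation.isIrrChar_character {V : Type} [AddCommGroup V] [Module ℂ V]
    [FiniteDimensional ℂ V] (ρ : Representation ℂ G V) [ρ.IsIrreducible] :
    IsIrrChar G ρ.character := by
  refine ⟨FDRep.of ρ, ?_, rfl⟩
  have : Invertible (Nat.card G : ℂ) := invertibleOfNonzero (by simp [Nat.card_eq_fintype_card])
  rw [FDRep.simple_iff_char_is_norm_one]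
  have h := Representation.char_orthonormal ρ ρ
  rw [if_pos ⟨Representation.Equiv.refl ρ⟩, inv_mul_eq_one₀ (by simp [Nat.card_eq_fintype_card])] at h
  exact h.symm

omit [Fintype G] in
theorem Representation.character_eq_add_of_isCompl {V : Type} [AddCommGroup V] [Module ℂ V]
    [FiniteDimensional ℂ V] (ρ : Representation ℂ G V) {σ τ : Subrepresentation ρ}
    (h : IsCompl σ.toSubmodule τ.toSubmodule) :
    ρ.character = σ.toRepresentation.character + τ.toRepresentation.character := by
  ext g
  have hint : DirectSum.IsInternal (fun b : Bool => (bif b then σ else τ).toSubmodule) := by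
    rw [DirectSum.isInternal_submodule_iff_isCompl _ (i := true) (j := false) (by simp)
      (by ext b; cases b <;> simp)]
    exact h
  have hf : ∀ b : Bool, Set.MapsTo (ρ g) (bif b then σ else τ).toSubmodule
      (bif b then σ else τ).toSubmodule :=
    fun b v hv => (bif b then σ else τ).apply_mem_toSubmodule g hv
  have := LinearMap.trace_eq_sum_trace_restrict hint hf
  rw [Fintype.sum_bool] at this
  exact this

theorem Representation.character_mem_span_irrChar {V : Type} [AddCommGroup V] [Module ℂ V]
    [FiniteDimensional ℂ V] (ρ : Representation ℂ G V) :
    ρ.character ∈ Submodule.span ℤ {f | IsIrrChar G f} := by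
  induction hn : Module.finrank ℂ V using Nat.strong_induction_on generalizing V with
  | _ n ih =>
  by_cases hirr : ρ.IsIrreducible
  · exact Submodule.subset_span ρ.isIrrChar_character
  rcases subsingleton_or_nontrivial V with hV | hV
  · have : ρ.character = 0 := by
      ext g
      rw [Representation.character, Subsingleton.elim (ρ g) 0]
      simp
    rw [this]
    exact zero_mem _
  have hnt : Nontrivial (Subrepresentation ρ) :=
    ⟨⊥, ⊤, fun h => bot_ne_top (α := Submodule ℂ V)
      (congrArg Subrepresentation.toSubmodule h)⟩
  obtain ⟨σ, hσ0, hσ1⟩ : ∃ σ : Subrepresentation ρ, σ ≠ ⊥ ∧ σ ≠ ⊤ := by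
    by_contra! hcon
    exact hirr ⟨fun σ => or_iff_not_imp_left.2 (hcon σ)⟩
  have : NeZero (Nat.card G : ℂ) := ⟨by simp [Nat.card_eq_fintype_card]⟩
  obtain ⟨τ, hστ⟩ := exists_isCompl σ
  have hc : IsCompl σ.toSubmodule τ.toSubmodule := by
    rw [isCompl_iff, disjoint_iff, codisjoint_iff] at hστ ⊢
    exact ⟨congrArg Subrepresentation.toSubmodule hστ.1,
      congrArg Subrepresentation.toSubmodule hστ.2⟩
  have hadd := Submodule.finrank_add_eq_of_isCompl hc
  have h1 : 0 < Module.finrank ℂ σ.toSubmodule := by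
    rw [Module.finrank_pos_iff, Submodule.nontrivial_iff_ne_bot]
    exact fun h => hσ0 (Subrepresentation.toSubmodule_injective h)
  have h2 : Module.finrank ℂ σ.toSubmodule < Module.finrank ℂ V :=
    Submodule.finrank_lt fun h => hσ1 (Subrepresentation.toSubmodule_injective h)
  rw [ρ.character_eq_add_of_isCompl hc]
  exact add_mem (ih _ (by omega) σ.toRepresentation rfl) (ih _ (by omega) τ.toRepresentation rfl)

/-- The permutation representation of an action on a finite set, twisted by a linear character. -/
def twistedPermRep {X : Type} (ε : G →* ℂ) (φ : G →* Equiv.Perm X) :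
    Representation ℂ G (X → ℂ) where
  toFun g := ε g • LinearMap.funLeft ℂ ℂ (φ g⁻¹)
  map_one' := by ext; simp [LinearMap.funLeft]
  map_mul' g h := by
    ext
    simp [LinearMap.funLeft, mul_assoc, mul_left_comm]

omit [Fintype G] in
theorem character_twistedPermRep {X : Type} [Fintype X] [DecidableEq X] (ε : G →* ℂ)
    (φ : G →* Equiv.Perm X) (g : G) :
    (twistedPermRep ε φ).character g = ε g * (Finset.univ.filter fun x => φ g x = x).card := by
  have : (twistedPermRep ε φ) g = ε g • LinearMap.funLeft ℂ ℂ (φ g⁻¹) := rfl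
  rw [Representation.character, this, map_smul, smul_eq_mul,
    LinearMap.trace_eq_matrix_trace ℂ (Pi.basisFun ℂ X)]
  congr 1
  simp only [Matrix.trace, Matrix.diag, LinearMap.toMatrix_apply, Pi.basisFun_apply,
    Pi.basisFun_repr, LinearMap.funLeft_apply, Pi.single_apply, map_inv]
  rw [Finset.sum_boole]
  congr 2
  ext x
  simp [eq_comm (a := x), Equiv.symm_apply_eq]

end Characters

section Colorings

variable {α κ : Type} [Fintype α] [DecidableEq α] [Fintype κ] [DecidableEq κ]

/-- The number of colorings of `α` with prescribed multiset of colors that are fixed by `g`. -/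
def fixedColorings (m : Multiset κ) (g : Equiv.Perm α) : ℕ :=
  (Finset.univ.filter fun c : α → κ => Finset.univ.val.map c = m ∧ c ∘ g = c).card

theorem map_univ_val_comp_equiv {α X : Type*} [Fintype α] (c : α → X) (g : Equiv.Perm α) :
    Finset.univ.val.map (c ∘ g) = Finset.univ.val.map c := by
  rw [← Multiset.map_map]
  congr 1
  exact congrArg Finset.val (Finset.map_univ_equiv g)

/-- The action of permutations on colorings with prescribed multiset of colors. -/
def coloringAction (α : Type) [Fintype α] {κ : Type} (m : Multiset κ) :
    Equiv.Perm α →* Equiv.Perm {c : α → κ // Finset.univ.val.map c = m} where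
  toFun g :=
    { toFun := fun c => ⟨c.1 ∘ g.symm, (map_univ_val_comp_equiv c.1 g.symm).trans c.2⟩
      invFun := fun c => ⟨c.1 ∘ g, (map_univ_val_comp_equiv c.1 g).trans c.2⟩
      left_inv := fun c => Subtype.ext (by ext; simp)
      right_inv := fun c => Subtype.ext (by ext; simp) }
  map_one' := rfl
  map_mul' _ _ := rfl

theorem comp_perm_symm_eq_iff {α X : Type*} (c : α → X) (g : Equiv.Perm α) :
    c ∘ g.symm = c ↔ c ∘ g = c := by
  rw [Equiv.comp_symm_eq, eq_comm]

theorem fixedColorings_inv (m : Multiset κ) (g : Equiv.Perm α) :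
    fixedColorings m g⁻¹ = fixedColorings m g := by
  simp only [fixedColorings, Equiv.Perm.inv_def, comp_perm_symm_eq_iff]

theorem character_coloringAction (ε : Equiv.Perm α →* ℂ) (m : Multiset κ) (g : Equiv.Perm α) :
    (twistedPermRep ε (coloringAction α m)).character g = ε g * fixedColorings m g := by
  rw [character_twistedPermRep, fixedColorings]
  congr 2
  rw [← Finset.card_map (Function.Embedding.subtype _)]
  congr 1
  ext c
  simp only [Finset.mem_map, Finset.mem_filter, Finset.mem_univ, true_and,
    Function.Embedding.subtype_apply, Subtype.exists, exists_and_right, exists_eq_right]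
  rw [← comp_perm_symm_eq_iff c g]
  constructor
  · rintro ⟨h, h'⟩
    exact ⟨h, congrArg Subtype.val h'⟩
  · rintro ⟨h, h'⟩
    exact ⟨h, Subtype.ext h'⟩

theorem exists_int_eq_average_mul_fixedColorings {f : Equiv.Perm α → ℂ}
    (hf : IsIrrChar (Equiv.Perm α) f) (ε : Equiv.Perm α →* ℂ) (m : Multiset κ) :
    ∃ z : ℤ, (z : ℂ) = (Nat.card (Equiv.Perm α) : ℂ)⁻¹ *
      ∑ g : Equiv.Perm α, f g * (ε g * fixedColorings m g) := by
  obtain ⟨V, -, rfl⟩ := hf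
  have : Invertible (Nat.card (Equiv.Perm α) : ℂ) :=
    invertibleOfNonzero (by simp [Nat.card_eq_fintype_card])
  have h := Representation.card_inv_mul_sum_char_eq_finrank
    (Representation.tprod V.ρ (twistedPermRep ε (coloringAction α m)))
  rw [Representation.char_tensor] at h
  simp only [Pi.mul_apply, character_coloringAction] at h
  exact ⟨_, (Int.cast_natCast _).trans h.symm⟩

theorem fixedColorings_mul (m m' : Multiset κ) (g : Equiv.Perm α) :
    fixedColorings m g * fixedColorings m' g =
      (Finset.univ.filter fun p : α → κ × κ => (Finset.univ.val.map (fun x => (p x).1) = m ∧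
        Finset.univ.val.map (fun x => (p x).2) = m') ∧ p ∘ g = p).card := by
  rw [fixedColorings, fixedColorings, ← Finset.card_product]
  refine Finset.card_equiv (Equiv.arrowProdEquivProdArrow α (fun _ => κ) (fun _ => κ)).symm ?_
  rintro ⟨c, d⟩
  simp only [Finset.mem_product, Finset.mem_filter, Finset.mem_univ, true_and, funext_iff,
    Function.comp_apply, Equiv.arrowProdEquivProdArrow, Equiv.coe_fn_symm_mk, Prod.ext_iff,
    forall_and]
  tauto

theorem sum_sign_stabilizer {X : Type} [DecidableEq X] (p : α → X) :
    ∑ g : Equiv.Perm α, (if p ∘ g = p then ((Equiv.Perm.sign g : ℤ) : ℂ) else 0) =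
      if Function.Injective p then 1 else 0 := by
  split_ifs with hp
  · rw [Finset.sum_eq_single 1]
    · simp
    · intro g _ hg
      rw [if_neg]
      intro h
      exact hg (Equiv.ext fun x => hp (congrFun h x))
    · simp
  · obtain ⟨a, b, hab, hne⟩ : ∃ a b, p a = p b ∧ a ≠ b := by
      simpa [Function.Injective] using hp
    have key : ∀ g : Equiv.Perm α, p ∘ (Equiv.swap a b * g : Equiv.Perm α) = p ∘ g := by
      intro g
      ext x
      simp only [Equiv.Perm.coe_mul, Function.comp_apply]
      rcases eq_or_ne (g x) a with h | h
      · rw [h, Equiv.swap_apply_left, hab]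
      rcases eq_or_ne (g x) b with h' | h'
      · rw [h', Equiv.swap_apply_right, hab]
      · rw [Equiv.swap_apply_of_ne_of_ne h h']
    have h := Equiv.sum_comp (Equiv.mulLeft (Equiv.swap a b))
      fun g : Equiv.Perm α => if p ∘ g = p then ((Equiv.Perm.sign g : ℤ) : ℂ) else 0
    simp only [Equiv.coe_mulLeft, key, map_mul, Equiv.Perm.sign_swap hne] at h
    simp only [neg_mul, one_mul, Units.val_neg, Int.cast_neg] at h
    have h2 : ∀ g : Equiv.Perm α,
        (if p ∘ g = p then -((Equiv.Perm.sign g : ℤ) : ℂ) else 0) =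
          -(if p ∘ g = p then ((Equiv.Perm.sign g : ℤ) : ℂ) else 0) := by
      intro g
      split_ifs <;> simp
    simp only [h2, Finset.sum_neg_distrib] at h
    exact self_eq_neg.1 h.symm

/-- Injective maps to `κ × κ` with prescribed multisets of first and second coordinates. -/
def injectiveFillings (α : Type) [Fintype α] [DecidableEq α] (m m' : Multiset κ) :
    Finset (α → κ × κ) :=
  Finset.univ.filter fun p => (Finset.univ.val.map (fun x => (p x).1) = m ∧
    Finset.univ.val.map (fun x => (p x).2) = m') ∧ Function.Injective p

theorem sum_sign_mul_fixedColorings (m m' : Multiset κ) :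
    ∑ g : Equiv.Perm α, fixedColorings m g *
      (((Equiv.Perm.sign g : ℤ) : ℂ) * fixedColorings m' g) =
      ((injectiveFillings α m m').card : ℂ) := by
  have h : ∀ g : Equiv.Perm α, (fixedColorings m g : ℂ) *
      (((Equiv.Perm.sign g : ℤ) : ℂ) * fixedColorings m' g) =
      ∑ p : α → κ × κ with (Finset.univ.val.map (fun x => (p x).1) = m ∧
        Finset.univ.val.map (fun x => (p x).2) = m'),
        if p ∘ g = p then ((Equiv.Perm.sign g : ℤ) : ℂ) else 0 := by
    intro g
    rw [mul_left_comm, ← Nat.cast_mul, fixedColorings_mul, ← Finset.filter_filter,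
      ← Finset.sum_filter, Finset.sum_const, nsmul_eq_mul, mul_comm]
  simp only [h]
  rw [Finset.sum_comm]
  simp only [sum_sign_stabilizer]
  rw [Finset.sum_boole, Finset.filter_filter, injectiveFillings]

end Colorings

section Diagrams

theorem exists_map_univ_val_eq {β : Type*} (n : ℕ) (s : Multiset β) (hs : s.card = n) :
    ∃ f : Fin n → β, Finset.univ.val.map f = s := by
  subst hs
  induction s using Quotient.inductionOn with
  | _ l => exact ⟨l.get, (Fin.univ_val_map _).trans (congrArg _ (List.ofFn_get l))⟩

theorem Nat.Partition.card_parts_le {n : ℕ} (p : n.Partition) : p.parts.card ≤ n := by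
  have h := Multiset.card_nsmul_le_sum (s := p.parts) (a := 1) fun x hx => p.parts_pos hx
  rwa [p.parts_sum, smul_eq_mul, mul_one] at h

theorem Nat.Partition.exists_rowLengths {n : ℕ} (p : n.Partition) :
    ∃ r : Fin n → ℕ, Finset.univ.val.map r =
      p.parts + Multiset.replicate (n - p.parts.card) 0 :=
  exists_map_univ_val_eq n _ (by simp [p.card_parts_le])

/-- The parts of a partition, in some order, padded by zeros to a function on `Fin n`. -/
noncomputable def Nat.Partition.rowLengths {n : ℕ} (p : n.Partition) : Fin n → ℕ :=
  p.exists_rowLengths.choose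

theorem Nat.Partition.map_rowLengths {n : ℕ} (p : n.Partition) :
    Finset.univ.val.map p.rowLengths = p.parts + Multiset.replicate (n - p.parts.card) 0 :=
  p.exists_rowLengths.choose_spec

theorem Nat.Partition.rowLengths_le {n : ℕ} (p : n.Partition) (i : Fin n) :
    p.rowLengths i ≤ n := by
  have h : p.rowLengths i ∈ Finset.univ.val.map p.rowLengths :=
    Multiset.mem_map_of_mem _ (Finset.mem_univ i)
  rw [p.map_rowLengths, Multiset.mem_add] at h
  rcases h with h | h
  · exact (Multiset.le_sum_of_mem h).trans p.parts_sum.le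
  · rw [Multiset.eq_of_mem_replicate h]
    exact Nat.zero_le _

/-- A left-justified diagram whose rows have the parts of the partition as lengths. -/
noncomputable def Nat.Partition.diagram {n : ℕ} (p : n.Partition) : Finset (Fin n × Fin n) :=
  Finset.univ.filter fun x => (x.2 : ℕ) < p.rowLengths x.1

theorem Nat.Partition.mem_diagram {n : ℕ} {p : n.Partition} {x : Fin n × Fin n} :
    x ∈ p.diagram ↔ (x.2 : ℕ) < p.rowLengths x.1 := by
  simp [diagram]

theorem Nat.Partition.card_diagram {n : ℕ} (p : n.Partition) : p.diagram.card = n := by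
  have h : p.diagram.card = ∑ i, p.rowLengths i := by
    rw [diagram, Finset.card_filter, Fintype.sum_prod_type]
    refine Finset.sum_congr rfl fun i _ => ?_
    rw [← Finset.card_filter]
    exact (Fin.card_filter_val_lt).trans (min_eq_right (p.rowLengths_le i))
  rw [h, Finset.sum, p.map_rowLengths]
  simp [p.parts_sum]

theorem Nat.Partition.count_map_snd_diagram {n : ℕ} (p : n.Partition) (j : Fin n) :
    (p.diagram.val.map Prod.snd).count j = p.parts.countP fun k => (j : ℕ) < k := by
  have h : p.parts.countP (fun k => (j : ℕ) < k) =
      (Finset.univ.val.map p.rowLengths).countP fun k => (j : ℕ) < k := by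
    rw [p.map_rowLengths, Multiset.countP_add]
    simp [Multiset.countP_eq_zero, Multiset.mem_replicate]
  rw [h, Multiset.countP_map, Multiset.count_map]
  rw [← Finset.filter_val, ← Finset.filter_val, Finset.card_val, Finset.card_val]
  refine Finset.card_bij (fun x _ => x.1) ?_ ?_ ?_
  · rintro ⟨i, j'⟩ hx
    simp only [Finset.mem_filter, mem_diagram] at hx
    simp [hx.2, hx.1]
  · rintro ⟨i, j'⟩ hx ⟨i', j''⟩ hx' rfl
    simp only [Finset.mem_filter] at hx hx'
    rw [← hx.2, ← hx'.2]
  · intro i hi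
    exact ⟨(i, j), by simpa [mem_diagram] using hi, rfl⟩

theorem Nat.Partition.map_snd_diagram_injective {n : ℕ} :
    Function.Injective fun p : n.Partition => p.diagram.val.map Prod.snd := by
  intro p q hpq
  have h1 : ∀ j : ℕ, p.parts.countP (j < ·) = q.parts.countP (j < ·) := by
    intro j
    rcases lt_or_ge j n with hj | hj
    · rw [← p.count_map_snd_diagram ⟨j, hj⟩, ← q.count_map_snd_diagram ⟨j, hj⟩]
      exact congrArg (Multiset.count _) hpq
    · have h0 : ∀ p : n.Partition, p.parts.countP (j < ·) = 0 := fun p =>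
        Multiset.countP_eq_zero.2 fun k hk =>
          not_lt.2 (((Multiset.le_sum_of_mem hk).trans p.parts_sum.le).trans hj)
      rw [h0, h0]
  have h2 : ∀ (s : Multiset ℕ) (k : ℕ),
      s.countP (k < ·) = s.count (k + 1) + s.countP (k + 1 < ·) := by
    intro s k
    induction s using Multiset.induction_on with
    | empty => simp
    | cons a s ih =>
      simp only [Multiset.countP_cons, Multiset.count_cons, ih]
      grind
  ext k
  rcases k with _ | k
  · rw [Multiset.count_eq_zero.2 fun h => (p.parts_pos h).ne rfl,
      Multiset.count_eq_zero.2 fun h => (q.parts_pos h).ne rfl]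
  · have hp := h2 p.parts k
    have hq := h2 q.parts k
    rw [h1, h1] at hp
    omega

variable {α : Type} [Fintype α] [DecidableEq α] {n : ℕ}

theorem injectiveFillings_image_eq_diagram (hn : Fintype.card α = n) {p : n.Partition} {m : Multiset (Fin n)}
    {f : α → Fin n × Fin n}
    (hf : f ∈ injectiveFillings α (p.diagram.val.map Prod.fst) m)
    (hm : (m.map Fin.val).sum ≤ ∑ x ∈ p.diagram, (x.2 : ℕ)) :
    Finset.univ.image f = p.diagram := by
  simp only [injectiveFillings, Finset.mem_filter, Finset.mem_univ, true_and] at hf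
  obtain ⟨⟨hfst, hsnd⟩, hinj⟩ := hf
  set S := Finset.univ.image f with hS
  have hrow : ∑ x ∈ S, (p.rowLengths x.1 : ℤ) = ∑ x ∈ p.diagram, (p.rowLengths x.1 : ℤ) := by
    rw [hS, Finset.sum_image fun a _ b _ h => hinj h]
    have := congrArg (fun s => (s.map fun i => (p.rowLengths i : ℤ)).sum) hfst
    simpa [Multiset.map_map] using this
  have hcol : ∑ x ∈ S, ((x.2 : ℕ) : ℤ) ≤ ∑ x ∈ p.diagram, ((x.2 : ℕ) : ℤ) := by
    rw [hS, Finset.sum_image fun a _ b _ h => hinj h]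
    rw [← hsnd, Multiset.map_map] at hm
    exact_mod_cast hm
  have hsub : p.diagram ⊆ S := by
    by_contra hns
    have h1 : ∑ x ∈ p.diagram, (((x.2 : ℕ) : ℤ) - p.rowLengths x.1) <
        ∑ x ∈ S ∩ p.diagram, (((x.2 : ℕ) : ℤ) - p.rowLengths x.1) := by
      rw [← Finset.sum_sdiff (Finset.inter_subset_right : S ∩ p.diagram ⊆ p.diagram)]
      have : ∑ x ∈ p.diagram \ (S ∩ p.diagram), (((x.2 : ℕ) : ℤ) - p.rowLengths x.1) < 0 := by
        apply Finset.sum_neg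
        · intro x hx
          have := Nat.Partition.mem_diagram.1 (Finset.mem_sdiff.1 hx).1
          omega
        · obtain ⟨x, hx, hxS⟩ := Finset.not_subset.1 hns
          exact ⟨x, by simp [hx, hxS]⟩
      linarith
    have h2 : ∑ x ∈ S ∩ p.diagram, (((x.2 : ℕ) : ℤ) - p.rowLengths x.1) ≤
        ∑ x ∈ S, (((x.2 : ℕ) : ℤ) - p.rowLengths x.1) := by
      apply Finset.sum_le_sum_of_subset_of_nonneg Finset.inter_subset_left
      intro x hx hx'
      have : x ∉ p.diagram := fun h => hx' (Finset.mem_inter.2 ⟨hx, h⟩)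
      rw [Nat.Partition.mem_diagram] at this
      omega
    have h3 := h1.trans_le h2
    simp only [Finset.sum_sub_distrib] at h3
    linarith
  refine (Finset.eq_of_subset_of_card_le hsub ?_).symm
  rw [p.card_diagram]
  exact Finset.card_image_le.trans hn.le

theorem map_snd_image_of_mem_injectiveFillings {κ : Type} [Fintype κ] [DecidableEq κ]
    {m m' : Multiset κ} {f : α → κ × κ} (hf : f ∈ injectiveFillings α m m') :
    (Finset.univ.image f).val.map Prod.snd = m' := by
  simp only [injectiveFillings, Finset.mem_filter, Finset.mem_univ, true_and] at hf
  rw [Finset.image_val_of_injOn hf.2.injOn, Multiset.map_map]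
  exact hf.1.2

theorem eq_of_mem_injectiveFillings (hn : Fintype.card α = n) {p q : n.Partition} {f : α → Fin n × Fin n}
    (hf : f ∈ injectiveFillings α (p.diagram.val.map Prod.fst) (q.diagram.val.map Prod.snd))
    (hpq : ∑ x ∈ q.diagram, (x.2 : ℕ) ≤ ∑ x ∈ p.diagram, (x.2 : ℕ)) : p = q := by
  apply Nat.Partition.map_snd_diagram_injective
  have h := map_snd_image_of_mem_injectiveFillings hf
  rwa [injectiveFillings_image_eq_diagram hn hf (by rw [Multiset.map_map]; exact hpq)] at h

theorem card_injectiveFillings_self (hn : Fintype.card α = n) (p : n.Partition) :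
    (injectiveFillings α (p.diagram.val.map Prod.fst) (p.diagram.val.map Prod.snd)).card =
      (Fintype.card α).factorial := by
  have hcard : Fintype.card α = Fintype.card p.diagram := by
    rw [Fintype.card_coe, p.card_diagram, hn]
  rw [← Fintype.card_equiv (Fintype.equivOfCardEq hcard), ← Finset.card_univ]
  symm
  refine Finset.card_bij (fun e _ x => (e x).1) ?_ ?_ ?_
  · intro e _
    have h : ∀ {X : Type} (t : Fin n × Fin n → X),
        Finset.univ.val.map (fun x => t (e x).1) = p.diagram.val.map t := by
      intro X t
      have h1 : Finset.univ.val.map e = (Finset.univ : Finset p.diagram).val :=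
        congrArg Finset.val (Finset.map_univ_equiv e)
      have h2 := congrArg (Multiset.map fun x : p.diagram => t x.1) h1
      rw [Multiset.map_map] at h2
      refine h2.trans ?_
      exact Multiset.attach_map_val' p.diagram.val t
    simp only [injectiveFillings, Finset.mem_filter, Finset.mem_univ, true_and]
    exact ⟨⟨h Prod.fst, h Prod.snd⟩, fun x y hxy => e.injective (Subtype.ext hxy)⟩
  · intro e _ e' _ h
    exact Equiv.ext fun x => Subtype.ext (congrFun h x)
  · intro f hf
    have himg := injectiveFillings_image_eq_diagram hn hf (by rw [Multiset.map_map]; exact le_rfl)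
    have hinj : Function.Injective f := (Finset.mem_filter.1 hf).2.2
    have hmem : ∀ x, f x ∈ p.diagram := fun x => himg ▸ Finset.mem_image_of_mem f (Finset.mem_univ x)
    refine ⟨Equiv.ofBijective (fun x => ⟨f x, hmem x⟩) ⟨fun x y h => hinj (congrArg Subtype.val h),
      ?_⟩, Finset.mem_univ _, rfl⟩
    rintro ⟨y, hy⟩
    obtain ⟨x, -, hx⟩ := Finset.mem_image.1 (himg.symm ▸ hy)
    exact ⟨x, Subtype.ext hx⟩

end Diagrams

section CharacterTable

variable {α : Type} [Fintype α] [DecidableEq α]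

theorem exists_comp_partition_eq {f : Equiv.Perm α → ℂ} (hf : ∀ g h, f (h * g * h⁻¹) = f g) :
    ∃ f' : (Fintype.card α).Partition → ℂ, f' ∘ Equiv.Perm.partition = f := by
  have h : ∀ g h : Equiv.Perm α, g.partition = h.partition → f g = f h := by
    intro g h hgh
    obtain ⟨c, hc⟩ := isConj_iff.1 (Equiv.Perm.partition_eq_of_isConj.2 hgh)
    rw [← hc, hf]
  obtain ⟨f', hf'⟩ := (Function.factorsThrough_iff f).1 fun x y hxy => h x y hxy
  exact ⟨f', hf'.symm⟩

theorem exists_linearIndependent_comp_partition :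
    ∃ v : {f : Equiv.Perm α → ℂ // IsIrrChar (Equiv.Perm α) f} →
      (Fintype.card α).Partition → ℂ,
      LinearIndependent ℂ v ∧ ∀ χ, v χ ∘ Equiv.Perm.partition = χ.1 := by
  choose v hv using fun χ : {f : Equiv.Perm α → ℂ // IsIrrChar (Equiv.Perm α) f} =>
    exists_comp_partition_eq χ.2.conj
  refine ⟨v, ?_, hv⟩
  apply LinearIndependent.of_comp (LinearMap.funLeft ℂ ℂ Equiv.Perm.partition)
  convert! linearIndependent_irrChar (G := Equiv.Perm α)
  exact funext hv

instance finite_irrChar_perm : Finite {f : Equiv.Perm α → ℂ // IsIrrChar (Equiv.Perm α) f} :=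
  exists_linearIndependent_comp_partition.choose_spec.1.finite

variable [Fintype {f : Equiv.Perm α → ℂ // IsIrrChar (Equiv.Perm α) f}]

theorem card_irrChar_perm_le :
    Fintype.card {f : Equiv.Perm α → ℂ // IsIrrChar (Equiv.Perm α) f} ≤
      Fintype.card (Fintype.card α).Partition := by
  obtain ⟨v, hv, -⟩ := exists_linearIndependent_comp_partition (α := α)
  simpa using hv.fintype_card_le_finrank

/-- The multiplicity of the trivial character of a Young subgroup in `f`, computed by averaging
over colorings of content `m`; it is a coefficient of the Frobenius characteristic. -/
noncomputable def coloringMult {κ : Type} [Fintype κ] [DecidableEq κ]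
    (f : Equiv.Perm α → ℂ) (m : Multiset κ) : ℂ :=
  (Nat.card (Equiv.Perm α) : ℂ)⁻¹ * ∑ g : Equiv.Perm α, f g * fixedColorings m g

omit [Fintype {f : Equiv.Perm α → ℂ // IsIrrChar (Equiv.Perm α) f}] in
theorem IsIrrChar.exists_int_eq_coloringMult {κ : Type} [Fintype κ] [DecidableEq κ]
    {f : Equiv.Perm α → ℂ} (hf : IsIrrChar (Equiv.Perm α) f) (m : Multiset κ) :
    ∃ z : ℤ, (z : ℂ) = coloringMult f m := by
  simpa [coloringMult] using exists_int_eq_average_mul_fixedColorings hf 1 m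

/-- The sign character with complex values. -/
noncomputable def complexSign (α : Type) [Fintype α] [DecidableEq α] : Equiv.Perm α →* ℂ :=
  ((Int.castRingHom ℂ : ℤ →* ℂ).comp (Units.coeHom ℤ)).comp Equiv.Perm.sign

theorem fixedColorings_eq_sum_irrChar {κ : Type} [Fintype κ] [DecidableEq κ] (m : Multiset κ)
    (g : Equiv.Perm α) : (fixedColorings m g : ℂ) =
      ∑ χ : {f : Equiv.Perm α → ℂ // IsIrrChar (Equiv.Perm α) f}, coloringMult χ.1 m * χ.1 g := by
  have h1 : (fun g : Equiv.Perm α => (fixedColorings m g : ℂ)) ∈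
      Submodule.span ℤ {f | IsIrrChar (Equiv.Perm α) f} := by
    have h := Representation.character_mem_span_irrChar (twistedPermRep 1 (coloringAction α m))
    convert! h using 1
    ext g
    rw [character_coloringAction, MonoidHom.one_apply, one_mul]
  have h2 := eq_sum_charPairing (G := Equiv.Perm α)
    (f := fun g : Equiv.Perm α => (fixedColorings m g : ℂ))
    (by
      have hr : (Set.range fun χ : {f : Equiv.Perm α → ℂ // IsIrrChar (Equiv.Perm α) f} => χ.1) =
          {f | IsIrrChar (Equiv.Perm α) f} := Subtype.range_coe
      rw [hr]
      exact Submodule.span_le_restrictScalars ℤ ℂ _ h1)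
  have h3 := congrFun h2 g
  simp only [Finset.sum_apply, Pi.smul_apply, smul_eq_mul] at h3
  rw [h3]
  refine Finset.sum_congr rfl fun χ _ => ?_
  congr 1
  rw [charPairing_apply, coloringMult, ← Equiv.sum_comp (Equiv.inv (Equiv.Perm α))]
  simp only [Equiv.inv_apply, fixedColorings_inv, inv_inv, mul_comm]

theorem sum_coloringMult_mul {κ : Type} [Fintype κ] [DecidableEq κ] (m : Multiset κ)
    (u : Equiv.Perm α → ℂ) :
    ∑ χ : {f : Equiv.Perm α → ℂ // IsIrrChar (Equiv.Perm α) f}, coloringMult χ.1 m *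
        ((Nat.card (Equiv.Perm α) : ℂ)⁻¹ * ∑ g : Equiv.Perm α, χ.1 g * u g) =
      (Nat.card (Equiv.Perm α) : ℂ)⁻¹ * ∑ g : Equiv.Perm α, fixedColorings m g * u g := by
  simp only [fixedColorings_eq_sum_irrChar m, Finset.mul_sum, Finset.sum_mul]
  rw [Finset.sum_comm]
  refine Finset.sum_congr rfl fun χ _ => Finset.sum_congr rfl fun g _ => ?_
  ring

theorem Matrix.mulVec_injective_of_triangular {P R : Type*} [Fintype P] [DecidableEq P]
    [Semiring R] (M : Matrix P P R) (E : P → ℕ) (hdiag : ∀ p, M p p = 1)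
    (htri : ∀ p q, E q ≤ E p → p ≠ q → M p q = 0) {v : P → R} (hv : M.mulVec v = 0) :
    v = 0 := by
  by_contra hne
  have hs : (Finset.univ.filter fun p => v p ≠ 0).Nonempty := by
    obtain ⟨p, hp⟩ := Function.ne_iff.1 hne
    exact ⟨p, by simpa using hp⟩
  obtain ⟨p, hp, hmax⟩ := Finset.exists_max_image _ E hs
  have h := congrFun hv p
  rw [Matrix.mulVec, dotProduct, Finset.sum_eq_single p, hdiag, one_mul] at h
  · exact (Finset.mem_filter.1 hp).2 h
  · intro q _ hq
    by_cases hvq : v q = 0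
    · rw [hvq, mul_zero]
    · rw [htri p q (hmax q (by simpa using hvq)) hq.symm, zero_mul]
  · simp

theorem coloringMult_matrix_surjective
    (a : {f : Equiv.Perm α → ℂ // IsIrrChar (Equiv.Perm α) f} →
      (Fintype.card α).Partition → ℤ)
    (ha : ∀ χ p, (a χ p : ℂ) = coloringMult χ.1 (p.diagram.val.map Prod.fst)) :
    Function.Surjective (Matrix.mulVecLin (Matrix.of fun p χ => (a χ p : ZMod 2))) := by
  choose b hb using fun (χ : {f : Equiv.Perm α → ℂ // IsIrrChar (Equiv.Perm α) f})
    (q : (Fintype.card α).Partition) =>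
    exists_int_eq_average_mul_fixedColorings χ.2 (complexSign α) (q.diagram.val.map Prod.snd)
  have hM : ∀ p q, ((∑ χ, a χ p * b χ q : ℤ) : ℂ) = (Nat.card (Equiv.Perm α) : ℂ)⁻¹ *
      ((injectiveFillings α (p.diagram.val.map Prod.fst) (q.diagram.val.map Prod.snd)).card : ℂ) := by
    intro p q
    push_cast
    simp only [ha, hb]
    rw [sum_coloringMult_mul, ← sum_sign_mul_fixedColorings]
    rfl
  set A : Matrix (Fintype.card α).Partition _ (ZMod 2) := Matrix.of fun p χ => (a χ p : ZMod 2)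
  set B : Matrix _ (Fintype.card α).Partition (ZMod 2) := Matrix.of fun χ q => (b χ q : ZMod 2)
  have hAB : ∀ p q, (A * B) p q = ((∑ χ, a χ p * b χ q : ℤ) : ZMod 2) := by
    intro p q
    simp [A, B, Matrix.mul_apply]
  have hinj : Function.Injective (A * B).mulVecLin := by
    rw [injective_iff_map_eq_zero]
    intro v hv
    refine Matrix.mulVec_injective_of_triangular (A * B)
      (fun p => ∑ x ∈ p.diagram, (x.2 : ℕ)) (fun p => ?_) (fun p q hE hpq => ?_) hv
    · have h := hM p p
      rw [card_injectiveFillings_self rfl, Nat.card_eq_fintype_card, Fintype.card_perm,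
        inv_mul_cancel₀ (by exact_mod_cast Nat.factorial_ne_zero _)] at h
      rw [hAB, Int.cast_eq_one.1 h, Int.cast_one]
    · have h := hM p q
      rw [Finset.card_eq_zero.2, Nat.cast_zero, mul_zero] at h
      · rw [hAB, Int.cast_eq_zero.1 h, Int.cast_zero]
      · rw [Finset.eq_empty_iff_forall_notMem]
        exact fun f hf => hpq (eq_of_mem_injectiveFillings rfl hf hE)
  have hsurj := LinearMap.injective_iff_surjective.1 hinj
  rw [Matrix.mulVecLin_mul, LinearMap.coe_comp] at hsurj
  exact hsurj.of_comp

theorem card_irrChar_perm :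
    Fintype.card {f : Equiv.Perm α → ℂ // IsIrrChar (Equiv.Perm α) f} =
      Fintype.card (Fintype.card α).Partition := by
  choose a ha using fun (χ : {f : Equiv.Perm α → ℂ // IsIrrChar (Equiv.Perm α) f})
    (p : (Fintype.card α).Partition) =>
    χ.2.exists_int_eq_coloringMult (p.diagram.val.map Prod.fst)
  refine le_antisymm card_irrChar_perm_le ?_
  simpa using LinearMap.finrank_le_finrank_of_surjective (coloringMult_matrix_surjective a ha)

theorem eq_zero_of_sum_coloringMult_eq_zero
    (a : {f : Equiv.Perm α → ℂ // IsIrrChar (Equiv.Perm α) f} →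
      (Fintype.card α).Partition → ℤ)
    (ha : ∀ χ p, (a χ p : ℂ) = coloringMult χ.1 (p.diagram.val.map Prod.fst))
    (c : {f : Equiv.Perm α → ℂ // IsIrrChar (Equiv.Perm α) f} → ZMod 2)
    (hc : ∀ p, ∑ χ, (a χ p : ZMod 2) * c χ = 0) : c = 0 := by
  have h := (LinearMap.injective_iff_surjective_of_finrank_eq_finrank
    (by simpa using card_irrChar_perm)).2 (coloringMult_matrix_surjective a ha)
  exact (injective_iff_map_eq_zero _).1 h c (funext hc)

theorem mem_span_irrChar_of_charPairing {f : Equiv.Perm α → ℂ}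
    (hf : ∀ g h, f (h * g * h⁻¹) = f g)
    (hint : ∀ χ, IsIrrChar (Equiv.Perm α) χ → ∃ z : ℤ, (z : ℂ) = charPairing χ f) :
    f ∈ Submodule.span ℤ {f | IsIrrChar (Equiv.Perm α) f} := by
  obtain ⟨v, hv, hvχ⟩ := exists_linearIndependent_comp_partition (α := α)
  obtain ⟨f', hf'⟩ := exists_comp_partition_eq hf
  have hspan := hv.span_eq_top_of_card_eq_finrank' (by simpa using card_irrChar_perm)
  have hmem : f' ∈ Submodule.span ℂ (Set.range v) := hspan ▸ Submodule.mem_top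
  have h := Submodule.mem_map_of_mem (f := LinearMap.funLeft ℂ ℂ Equiv.Perm.partition) hmem
  rw [Submodule.map_span, ← Set.range_comp] at h
  have hcomp : LinearMap.funLeft ℂ ℂ Equiv.Perm.partition ∘ v = fun χ => χ.1 := funext hvχ
  rw [hcomp, show LinearMap.funLeft ℂ ℂ Equiv.Perm.partition f' = f from hf'] at h
  rw [eq_sum_charPairing h]
  refine Submodule.sum_mem _ fun χ _ => ?_
  obtain ⟨z, hz⟩ := hint χ.1 χ.2
  rw [← hz, Int.cast_smul_eq_zsmul]
  exact Submodule.smul_mem _ z (Submodule.subset_span χ.2)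

end CharacterTable

section Induction

variable {H G : Type*} [Group H] [Fintype H] [Group G] [Fintype G]

theorem indHom_conj (φ : H →* G) (u : H → ℂ) (g k : G) :
    indHom φ u (k * g * k⁻¹) = indHom φ u g := by
  rw [indHom, indHom, ← Equiv.sum_comp (Equiv.mulLeft k)]
  simp [mul_assoc]

/-- A form of Frobenius reciprocity. -/
theorem sum_indHom_smul {M : Type*} [AddCommGroup M] [Module ℂ M] (φ : H →* G) (u : H → ℂ)
    (Ψ : G → M) (hΨ : ∀ g k, Ψ (k * g * k⁻¹) = Ψ g) :
    (Nat.card G : ℂ)⁻¹ • ∑ g, indHom φ u g • Ψ g =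
      (Nat.card H : ℂ)⁻¹ • ∑ h, u h • Ψ (φ h) := by
  have hG : (Nat.card G : ℂ) ≠ 0 := by simp [Nat.card_eq_fintype_card]
  have key : ∀ (x : G) (h : H),
      ∑ g : G, (if φ h = x⁻¹ * g * x then u h else 0) • Ψ g = u h • Ψ (φ h) := by
    intro x h
    rw [Finset.sum_eq_single (x * φ h * x⁻¹)]
    · rw [if_pos (by group), hΨ]
    · intro g _ hg
      rw [if_neg, zero_smul]
      intro hh
      apply hg
      rw [hh]
      group
    · simp
  simp only [indHom, mul_smul, Finset.sum_smul, ← Finset.smul_sum]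
  rw [Finset.sum_comm]
  have h1 : ∀ x : G, ∑ g : G, ∑ h : H, (if φ h = x⁻¹ * g * x then u h else 0) • Ψ g =
      ∑ h, u h • Ψ (φ h) := by
    intro x
    rw [Finset.sum_comm]
    exact Finset.sum_congr rfl fun h _ => key x h
  rw [Finset.sum_congr rfl fun x _ => h1 x, Finset.sum_const, Finset.card_univ,
    ← Nat.card_eq_fintype_card, ← Nat.cast_smul_eq_nsmul ℂ, smul_comm (Nat.card H : ℂ)⁻¹,
    smul_smul, inv_mul_cancel₀ hG, one_smul]

theorem exists_int_eq_charPairing_indHom {H G : Type} [Group H] [Fintype H] [Group G] [Fintype G]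
    {V : Type} [AddCommGroup V] [Module ℂ V] [FiniteDimensional ℂ V]
    (φ : H →* G) (σ : Representation ℂ H V) {ψ : G → ℂ} (hψ : IsIrrChar G ψ) :
    ∃ z : ℤ, (z : ℂ) = charPairing ψ (indHom φ σ.character) := by
  obtain ⟨W, -, rfl⟩ := hψ
  have : Invertible (Nat.card H : ℂ) :=
    invertibleOfNonzero (by simp [Nat.card_eq_fintype_card])
  have h := sum_indHom_smul φ σ.character (fun g => W.character g⁻¹) fun g k => by
    simpa [mul_assoc] using W.char_conj g⁻¹ k
  have h2 := Representation.card_inv_mul_sum_char_mul_char_eq_finrank (W.ρ.comp φ) σ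
  refine ⟨Module.finrank ℂ (Representation.IntertwiningMap (W.ρ.comp φ) σ), ?_⟩
  rw [charPairing_apply]
  simp only [smul_eq_mul] at h
  rw [h, Int.cast_natCast, ← h2]
  simp only [← map_inv]
  rfl

end Induction

section FrobeniusCharacteristic

variable {α β : Type} [Fintype α] [DecidableEq α] [Fintype β] [DecidableEq β]
  (κ : Type) [Fintype κ] [DecidableEq κ]

theorem indHom_sumCongrHom_mem_span {χ : Equiv.Perm α → ℂ} {ψ : Equiv.Perm β → ℂ}
    (hχ : IsIrrChar (Equiv.Perm α) χ) (hψ : IsIrrChar (Equiv.Perm β) ψ) :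
    indHom (Equiv.Perm.sumCongrHom α β) (fun p => χ p.1 * ψ p.2) ∈
      Submodule.span ℤ {f | IsIrrChar (Equiv.Perm (α ⊕ β)) f} := by
  have := Fintype.ofFinite {f : Equiv.Perm (α ⊕ β) → ℂ // IsIrrChar (Equiv.Perm (α ⊕ β)) f}
  refine mem_span_irrChar_of_charPairing (fun g k => indHom_conj _ _ _ _) fun ξ hξ => ?_
  obtain ⟨V, -, rfl⟩ := hχ
  obtain ⟨W, -, rfl⟩ := hψ
  have h := exists_int_eq_charPairing_indHom (Equiv.Perm.sumCongrHom α β)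
    (Representation.tprod (V.ρ.comp (MonoidHom.fst (Equiv.Perm α) (Equiv.Perm β)))
      (W.ρ.comp (MonoidHom.snd (Equiv.Perm α) (Equiv.Perm β)))) hξ
  rw [Representation.char_tensor] at h
  exact h

/-- The generating polynomial of the colorings fixed by `g`, that is, the power sum symmetric
polynomial attached to the cycle type of `g`. -/
noncomputable def coloringPoly (g : Equiv.Perm α) : MvPolynomial κ ℂ :=
  ∑ c : α → κ with c ∘ g = c, ∏ i, MvPolynomial.X (c i)

theorem coeff_coloringPoly (m : Multiset κ) (g : Equiv.Perm α) :
    (coloringPoly κ g).coeff (Multiset.toFinsupp m) = fixedColorings m g := by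
  have h : ∀ c : α → κ, (∏ i, MvPolynomial.X (c i) : MvPolynomial κ ℂ) =
      MvPolynomial.monomial (Multiset.toFinsupp (Finset.univ.val.map c)) 1 := by
    intro c
    have hc : Finset.univ.val.map c = ∑ i, {c i} := by
      rw [← Multiset.sum_map_singleton (Finset.univ.val.map c), Multiset.map_map]
      rfl
    simp only [hc, map_sum, Multiset.toFinsupp_singleton, MvPolynomial.monomial_sum_one]
    rfl
  simp only [coloringPoly, h, MvPolynomial.coeff_sum, MvPolynomial.coeff_monomial,
    EmbeddingLike.apply_eq_iff_eq, fixedColorings]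
  rw [Finset.sum_boole, Finset.filter_filter]
  simp only [and_comm]

theorem coloringPoly_conj (g k : Equiv.Perm α) :
    coloringPoly κ (k * g * k⁻¹) = coloringPoly κ g := by
  refine Finset.sum_equiv (Equiv.arrowCongr k.symm (Equiv.refl κ)) (fun c => ?_) fun c _ => ?_
  · simp only [Finset.mem_filter, Finset.mem_univ, true_and, funext_iff, Function.comp_apply,
      Equiv.arrowCongr_apply, Equiv.coe_refl, id, Equiv.symm_symm]
    rw [← k.forall_congr_right]
    simp
  · simpa using (Equiv.prod_comp k fun i => (MvPolynomial.X (c i) : MvPolynomial κ ℂ)).symm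

theorem coloringPoly_sumCongr (g : Equiv.Perm α) (h : Equiv.Perm β) :
    coloringPoly κ (Equiv.Perm.sumCongr g h) = coloringPoly κ g * coloringPoly κ h := by
  rw [coloringPoly, coloringPoly, coloringPoly, Finset.sum_mul_sum, ← Finset.sum_product']
  refine Finset.sum_equiv (Equiv.sumArrowEquivProdArrow α β κ) (fun c => ?_) fun c _ => ?_
  · simp [funext_iff, Equiv.sumArrowEquivProdArrow]
  · simp [Equiv.sumArrowEquivProdArrow]

/-- The Frobenius characteristic of a function on the symmetric group, as a polynomial in
variables indexed by `κ`. -/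
noncomputable def frobeniusChar : (Equiv.Perm α → ℂ) →ₗ[ℂ] MvPolynomial κ ℂ where
  toFun f := (Nat.card (Equiv.Perm α) : ℂ)⁻¹ • ∑ g, f g • coloringPoly κ g
  map_add' f f' := by simp [add_smul, Finset.sum_add_distrib]
  map_smul' c f := by
    simp only [Pi.smul_apply, smul_eq_mul, mul_smul, ← Finset.smul_sum, RingHom.id_apply]
    exact smul_comm _ _ _

theorem frobeniusChar_apply (f : Equiv.Perm α → ℂ) :
    frobeniusChar κ f = (Nat.card (Equiv.Perm α) : ℂ)⁻¹ • ∑ g, f g • coloringPoly κ g := rfl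

theorem coeff_frobeniusChar (f : Equiv.Perm α → ℂ) (m : Multiset κ) :
    (frobeniusChar κ f).coeff (Multiset.toFinsupp m) = coloringMult f m := by
  simp [frobeniusChar_apply, coloringMult, MvPolynomial.coeff_sum, coeff_coloringPoly]

theorem frobeniusChar_indHom (χ : Equiv.Perm α → ℂ) (ψ : Equiv.Perm β → ℂ) :
    frobeniusChar κ (indHom (Equiv.Perm.sumCongrHom α β) (fun p => χ p.1 * ψ p.2)) =
      frobeniusChar κ χ * frobeniusChar κ ψ := by
  rw [frobeniusChar_apply, sum_indHom_smul _ _ _ (coloringPoly_conj κ), frobeniusChar_apply,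
    frobeniusChar_apply, smul_mul_smul_comm, Finset.sum_mul_sum, Fintype.sum_prod_type, Nat.card_prod,
    Nat.cast_mul, mul_inv]
  congr 1
  refine Finset.sum_congr rfl fun g _ => Finset.sum_congr rfl fun h _ => ?_
  rw [smul_mul_smul_comm, ← coloringPoly_sumCongr]
  rfl

theorem IsIrrChar.exists_map_eq_frobeniusChar {χ : Equiv.Perm α → ℂ}
    (hχ : IsIrrChar (Equiv.Perm α) χ) :
    ∃ P : MvPolynomial κ ℤ, MvPolynomial.map (Int.castRingHom ℂ) P = frobeniusChar κ χ := by
  rw [← Set.mem_range, MvPolynomial.mem_range_map_iff_coeffs_subset]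
  intro z hz
  obtain ⟨s, -, rfl⟩ := MvPolynomial.mem_coeffs_iff.1 hz
  obtain ⟨z, hz⟩ := hχ.exists_int_eq_coloringMult (Finsupp.toMultiset s)
  refine ⟨z, ?_⟩
  rw [← coeff_frobeniusChar, Finsupp.toMultiset_toFinsupp] at hz
  exact hz

end FrobeniusCharacteristic

section ModTwo

theorem linearIndependent_int_of_map_zmod {ι σ : Type*} [Fintype ι] (p : ℕ) [Fact p.Prime]
    {v : ι → MvPolynomial σ ℤ}
    (hv : LinearIndependent (ZMod p) fun i => MvPolynomial.map (Int.castRingHom (ZMod p)) (v i)) :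
    LinearIndependent ℤ v := by
  have hp : 1 < p := (Fact.out : p.Prime).one_lt
  have key : ∀ (k : ℕ) (c : ι → ℤ), ∑ i, c i • v i = 0 → ∀ i, (p : ℤ) ^ k ∣ c i := by
    intro k
    induction k with
    | zero => simp
    | succ k ih =>
      intro c hc
      have h := congrArg (MvPolynomial.map (Int.castRingHom (ZMod p))) hc
      simp only [map_sum, map_zsmul, map_zero, ← Int.cast_smul_eq_zsmul (ZMod p)] at h
      have hd := fun i =>
        (ZMod.intCast_zmod_eq_zero_iff_dvd _ _).1 (Fintype.linearIndependent_iff.1 hv _ h i)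
      choose d hd using hd
      intro i
      rw [hd, pow_succ']
      refine mul_dvd_mul_left _ (ih d ?_ i)
      simp only [hd, mul_smul, ← Finset.smul_sum] at hc
      exact (smul_eq_zero.1 hc).resolve_left (by positivity)
  refine Fintype.linearIndependent_iff.2 fun c hc i => ?_
  refine Int.eq_zero_of_abs_lt_dvd (key (c i).natAbs c hc i) ?_
  rw [Int.abs_eq_natAbs]
  exact_mod_cast Nat.lt_pow_self hp

theorem linearIndependent_sq_of_zmod_two {ι A : Type*} [Fintype ι] [CommRing A] [IsDomain A]
    [Algebra (ZMod 2) A] {v : ι → A} (hv : LinearIndependent (ZMod 2) v) :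
    LinearIndependent (ZMod 2) fun i => v i * v i := by
  have : CharP A 2 := charP_of_injective_algebraMap (algebraMap (ZMod 2) A).injective 2
  rw [Fintype.linearIndependent_iff] at hv ⊢
  refine fun c hc => hv c ?_
  rw [← pow_eq_zero_iff two_ne_zero, sum_pow_char, ← hc]
  refine Finset.sum_congr rfl fun i _ => ?_
  rw [smul_pow, ZMod.pow_card, pow_two]

variable {α : Type} [Fintype α] [DecidableEq α]

theorem linearIndependent_indHom_sumCongrHom :
    LinearIndependent ℤ
      (fun χ : {f : Equiv.Perm α → ℂ // IsIrrChar (Equiv.Perm α) f} =>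
        indHom (Equiv.Perm.sumCongrHom α α) (fun p => χ.1 p.1 * χ.1 p.2)) := by
  have := Fintype.ofFinite {f : Equiv.Perm α → ℂ // IsIrrChar (Equiv.Perm α) f}
  choose P hP using fun χ : {f : Equiv.Perm α → ℂ // IsIrrChar (Equiv.Perm α) f} =>
    χ.2.exists_map_eq_frobeniusChar (Fin (Fintype.card α))
  have h2 : LinearIndependent (ZMod 2) fun χ =>
      MvPolynomial.map (Int.castRingHom (ZMod 2)) (P χ) := by
    rw [Fintype.linearIndependent_iff]
    intro c hc i
    refine congrFun (eq_zero_of_sum_coloringMult_eq_zero (fun χ p => (P χ).coeff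
      (Multiset.toFinsupp (p.diagram.val.map Prod.fst))) (fun χ p => ?_) c fun p => ?_) i
    · rw [← coeff_frobeniusChar, ← hP, MvPolynomial.coeff_map]
      rfl
    · have h := congrArg (MvPolynomial.coeff
        (Multiset.toFinsupp (p.diagram.val.map Prod.fst))) hc
      simpa [MvPolynomial.coeff_sum, MvPolynomial.coeff_map, mul_comm] using h
  have h3 : LinearIndependent ℤ fun χ => P χ * P χ := by
    apply linearIndependent_int_of_map_zmod 2
    simp only [map_mul]
    exact linearIndependent_sq_of_zmod_two h2
  have h4 := h3.map' (MvPolynomial.map (Int.castRingHom ℂ)).toIntAlgHom.toLinearMap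
    (LinearMap.ker_eq_bot.2 (MvPolynomial.map_injective _ Int.cast_injective))
  apply LinearIndependent.of_comp ((frobeniusChar (Fin (Fintype.card α))).restrictScalars ℤ)
  convert! h4 using 1
  ext1 χ
  simp only [Function.comp_apply, LinearMap.restrictScalars_apply, frobeniusChar_indHom, ← hP]
  exact (map_mul _ _ _).symm

end ModTwo

/-- the virtual characters `Ind_{S_w × S_w}^{S_{2w}} (χ ⊠ χ)`, for `χ`
ranging over the irreducible characters of `S_w`, are `ℤ`-linearly independent elements of
the group of virtual characters of `S_{2w}` (realized inside the class functions, where the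
virtual characters form the `ℤ`-span of the irreducible characters). -/
theorem ind_diag_linearIndependent (w : ℕ) (hw : 0 < w) :
    (∀ χ : Equiv.Perm (Fin w) → ℂ, IsIrrChar (Equiv.Perm (Fin w)) χ →
      indHom (Equiv.Perm.sumCongrHom (Fin w) (Fin w)) (fun p => χ p.1 * χ p.2) ∈
        Submodule.span ℤ {f | IsIrrChar (Equiv.Perm (Fin w ⊕ Fin w)) f}) ∧
    LinearIndependent ℤ
      (fun χ : {f : Equiv.Perm (Fin w) → ℂ // IsIrrChar (Equiv.Perm (Fin w)) f} =>
        indHom (Equiv.Perm.sumCongrHom (Fin w) (Fin w)) (fun p => χ.1 p.1 * χ.1 p.2)) :=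
  ⟨fun _ hχ => indHom_sumCongrHom_mem_span hχ hχ, linearIndependent_indHom_sumCongrHom⟩
end
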